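/- Let v be a vertex of tenacity t ≤ l_m, and let p be a maxlevel(v) path. Then there exists exactly one bridge of tenacity t on p. -/

import Mathlib

attribute [local instance] Classical.propDecidable

variable {V : Type*} [DecidableEq V]

namespace MV

/-- A walk is alternating (w.r.t. matching `M`) in the sense used for alternating paths
starting at an unmatched vertex: the `i`-th edge is matched iff `i` is odd. -/
def IsAlt (G : SimpleGraph V) (M : G.Subgraph) {a b : V} (w : G.Walk a b) : Prop :=
  ∀ i (h : i < w.edges.length), (w.edges.get ⟨i, h⟩ ∈ M.edgeSet ↔ Odd i)

/-- length of a minimum even alternating path from an unmatched vertex to `v`. -/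
noncomputable def evenlevel (G : SimpleGraph V) (M : G.Subgraph) (v : V) : ℕ∞ :=
  sInf {n : ℕ∞ | ∃ (f : V) (w : G.Walk f v),
    f ∉ M.verts ∧ w.IsPath ∧ IsAlt G M w ∧ Even w.length ∧ n = (w.length : ℕ∞)}

/-- length of a minimum odd alternating path from an unmatched vertex to `v`. -/
noncomputable def oddlevel (G : SimpleGraph V) (M : G.Subgraph) (v : V) : ℕ∞ :=
  sInf {n : ℕ∞ | ∃ (f : V) (w : G.Walk f v),
    f ∉ M.verts ∧ w.IsPath ∧ IsAlt G M w ∧ Odd w.length ∧ n = (w.length : ℕ∞)}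

noncomputable def tenacity (G : SimpleGraph V) (M : G.Subgraph) (v : V) : ℕ∞ :=
  evenlevel G M v + oddlevel G M v

noncomputable def minlevel (G : SimpleGraph V) (M : G.Subgraph) (v : V) : ℕ∞ :=
  min (evenlevel G M v) (oddlevel G M v)

noncomputable def maxlevel (G : SimpleGraph V) (M : G.Subgraph) (v : V) : ℕ∞ :=
  max (evenlevel G M v) (oddlevel G M v)

/-- the length of a minimum length augmenting path w.r.t. `M` (`⊤` if none exists). -/
noncomputable def lm (G : SimpleGraph V) (M : G.Subgraph) : ℕ∞ :=
  sInf {n : ℕ∞ | ∃ (f g : V) (w : G.Walk f g), f ∉ M.verts ∧ g ∉ M.verts ∧ f ≠ g ∧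
    w.IsPath ∧ IsAlt G M w ∧ Odd w.length ∧ n = (w.length : ℕ∞)}

/-- `w` is a minimum even- or odd-length alternating path from an unmatched vertex to `v`
  (an `evenlevel(v)` or `oddlevel(v)` path). -/
def IsMinPathTo (G : SimpleGraph V) (M : G.Subgraph) (v f : V) (w : G.Walk f v) : Prop :=
  f ∉ M.verts ∧ w.IsPath ∧ IsAlt G M w ∧
    ((Even w.length ∧ (w.length : ℕ∞) = evenlevel G M v) ∨
     (Odd w.length ∧ (w.length : ℕ∞) = oddlevel G M v))

/-- `b` is the vertex of tenacity greater than `tenacity v` on `w` furthest from the start. -/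
def IsFurthestHigh (G : SimpleGraph V) (M : G.Subgraph) (v : V) {f v' : V}
    (w : G.Walk f v') (b : V) : Prop :=
  ∃ hb : b ∈ w.support, tenacity G M v < tenacity G M b ∧
    ∀ u, ∀ hu : u ∈ w.support, tenacity G M v < tenacity G M u →
      (w.takeUntil u hu).length ≤ (w.takeUntil b hb).length

/-- `b` is the base of `v`: the furthest higher-tenacity vertex on every minimum
even or odd alternating path to `v`. -/
def IsBase (G : SimpleGraph V) (M : G.Subgraph) (v b : V) : Prop :=
  ∀ (f : V) (w : G.Walk f v), IsMinPathTo G M v f w → IsFurthestHigh G M v w b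

/-- minimum even length alternating path from `b` to `v` starting with an unmatched edge
  (`evenlevel(b; v)`). -/
noncomputable def evenlevelFrom (G : SimpleGraph V) (M : G.Subgraph) (b v : V) : ℕ∞ :=
  sInf {n : ℕ∞ | ∃ w : G.Walk b v,
    w.IsPath ∧ IsAlt G M w ∧ Even w.length ∧ n = (w.length : ℕ∞)}

/-- minimum odd length alternating path from `b` to `v` starting with an unmatched edge
  (`oddlevel(b; v)`). -/
noncomputable def oddlevelFrom (G : SimpleGraph V) (M : G.Subgraph) (b v : V) : ℕ∞ :=
  sInf {n : ℕ∞ | ∃ w : G.Walk b v,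
    w.IsPath ∧ IsAlt G M w ∧ Odd w.length ∧ n = (w.length : ℕ∞)}

def Outer (G : SimpleGraph V) (M : G.Subgraph) (v : V) : Prop :=
  evenlevel G M v < oddlevel G M v

/-- The blossom `B_{b,t}`, defined recursively, relative to a base function `bse`. -/
noncomputable def blossom (G : SimpleGraph V) (M : G.Subgraph) (bse : V → V) :
    ℕ → V → Set V
  | 0, _ => ∅
  | 1, _ => ∅
  | (t + 2), b =>
      {v | tenacity G M v = ((t + 2 : ℕ) : ℕ∞) ∧ bse v = b} ∪
      ⋃ v ∈ {u | (u = b ∨ (tenacity G M u = ((t + 2 : ℕ) : ℕ∞) ∧ bse u = b)) ∧ Outer G M u},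
        blossom G M bse t v

/-- The nesting depth `N(B_{b,t})`. -/
noncomputable def nestDepth (G : SimpleGraph V) (M : G.Subgraph) (bse : V → V) :
    ℕ → V → ℕ
  | 0, _ => 0
  | 1, _ => 0
  | (t + 2), b =>
      if {v | tenacity G M v = ((t + 2 : ℕ) : ℕ∞) ∧ bse v = b}.Nonempty then
        1 + sSup ((fun v => nestDepth G M bse t v) ''
          {u | (u = b ∨ (tenacity G M u = ((t + 2 : ℕ) : ℕ∞) ∧ bse u = b)) ∧ Outer G M u})
      else nestDepth G M bse t b

/-- `bse` assigns to each vertex of tenacity `< l_m` its (unique) base. -/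
def BaseFn (G : SimpleGraph V) (M : G.Subgraph) (bse : V → V) : Prop :=
  ∀ v, tenacity G M v < lm G M → IsBase G M v (bse v)

/-- `u` is a predecessor of `v`: `(u,v)` is the last edge of some `minlevel(v)` path. -/
def IsPred (G : SimpleGraph V) (M : G.Subgraph) (u v : V) : Prop :=
  ∃ (f : V) (w : G.Walk f v), f ∉ M.verts ∧ w.IsPath ∧ IsAlt G M w ∧
    (w.length : ℕ∞) = minlevel G M v ∧
    0 < w.length ∧ w.getVert (w.length - 1) = u

/-- A bridge is an edge of `G` that is not a prop. -/
def IsBridge (G : SimpleGraph V) (M : G.Subgraph) (u v : V) : Prop :=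
  G.Adj u v ∧ ¬ IsPred G M u v ∧ ¬ IsPred G M v u

/-- tenacity of an edge. -/
noncomputable def edgeTenacity (G : SimpleGraph V) (M : G.Subgraph) (u v : V) : ℕ∞ :=
  if s(u, v) ∈ M.edgeSet then oddlevel G M u + oddlevel G M v + 1
  else evenlevel G M u + evenlevel G M v + 1

def AP {α : Type*} (U Mt : α → α → Prop) (x : ℕ → α) (L : ℕ) : Prop :=
  (∀ b, ¬ Mt (x 0) b) ∧ (∀ i j, i ≤ L → j ≤ L → x i = x j → i = j) ∧
  (∀ i, i < L → i % 2 = 0 → U (x i) (x (i+1))) ∧ (∀ i, i < L → i % 2 = 1 → Mt (x i) (x (i+1)))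

structure Sys (α : Type*) where
  U : α → α → Prop
  Mt : α → α → Prop
  ev : α → ℕ
  od : α → ℕ
  K : ℕ
  T : ℕ
  Usymm : ∀ {a b}, U a b → U b a
  Uirr : ∀ {a}, ¬ U a a
  Msymm : ∀ {a b}, Mt a b → Mt b a
  Mirr : ∀ {a}, ¬ Mt a a
  Muniq : ∀ {a b c}, Mt a b → Mt a c → b = c
  ev_par : ∀ a, ev a % 2 = 0
  od_par : ∀ a, od a % 2 = 1
  ev_le : ∀ {x L}, AP U Mt x L → L % 2 = 0 → ev (x L) ≤ L
  od_le : ∀ {x L}, AP U Mt x L → L % 2 = 1 → od (x L) ≤ L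
  ev_ex : ∀ {a}, ev a < K → ∃ x, AP U Mt x (ev a) ∧ x (ev a) = a
  od_ex : ∀ {a}, od a < K → ∃ x, AP U Mt x (od a) ∧ x (od a) = a
  ev_mate : ∀ {a b}, Mt a b → ev a = od b + 1
  aug : ∀ {x L}, AP U Mt x L → L % 2 = 1 → (∀ b, ¬ Mt (x L) b) → T ≤ L
  TK : 2 * T + 8 ≤ K

namespace Sys
variable {α : Type*} (S : Sys α)

def P (x : ℕ → α) (L : ℕ) : Prop := AP S.U S.Mt x L
def ten (a : α) : ℕ := S.ev a + S.od a
def Ed (s : ℕ) (a b : α) : Prop :=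
  (S.U a b ∧ S.ev a + S.ev b + 1 ≤ s) ∨ (S.Mt a b ∧ S.od a + S.od b + 1 ≤ s)
def Conn (s : ℕ) : α → α → Prop := Relation.EqvGen (S.Ed s)
def B (s : ℕ) : Prop := ∀ a b, S.Conn s a b → s < S.ten a → s < S.ten b → a = b
def isE (n : ℕ) (a : α) : Prop := 2 * S.ev a < 2 * n + 1 ∨ S.ten a < 2 * n + 1
noncomputable def Y (n : ℕ) (a : α) : ℤ :=
  if S.isE n a then 2 * (S.ev a : ℤ) - (2 * n + 1) else max 0 (2 * (n:ℤ) + 1 - 2 * S.od a)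
noncomputable def cn (j : ℕ) (a b : α) : ℤ := if S.Conn (2 * j) a b then 1 else 0
noncomputable def cnt (n : ℕ) (a b : α) : ℤ := ∑ j ∈ Finset.range (n+1), S.cn j a b
noncomputable def D (x : ℕ → α) (j : ℕ) : ℕ → ℤ
  | 0 => 0
  | i + 1 => D x j i + (if i % 2 = 0 then - S.cn j (x i) (x (i+1)) else S.cn j (x i) (x (i+1)))
def nb (x : ℕ → α) (j i : ℕ) : Prop := ∀ k ≤ i, S.Conn (2 * j) (x k) (x i) → S.ten (x k) ≤ 2 * j
noncomputable def g (x : ℕ → α) (j i : ℕ) : ℤ :=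
  (if S.nb x j i then 1 else 0) - (if i % 2 = 1 ∧ S.ten (x i) ≤ 2 * j then 1 else 0)
noncomputable def F (n : ℕ) (x : ℕ → α) (i : ℕ) : ℤ :=
  2 * i - (2 * n + 1) - (if i % 2 = 0 then S.Y n (x i) else - S.Y n (x i))
    - 4 * ∑ j ∈ Finset.range (n+1), S.D x j i
def Tight (n : ℕ) (x : ℕ → α) (L : ℕ) : Prop :=
  S.P x L ∧ ((L % 2 = 0 ∧ (2 * L : ℤ) = 2 * n + 1 + S.Y n (x L)) ∨
    (L % 2 = 1 ∧ (2 * L : ℤ) = 2 * n + 1 - S.Y n (x L) ∧ 2 * n + 1 ≤ S.ten (x L)))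
def Bs (n : ℕ) : Prop := ∀ j, j ≤ n → S.B (2 * j)

variable {S}

theorem ten_par (a : α) : S.ten a % 2 = 1 := by
  have := S.ev_par a; have := S.od_par a; unfold ten; omega

theorem Conn.symm {s : ℕ} {a b : α} (h : S.Conn s a b) : S.Conn s b a := Relation.EqvGen.symm _ _ h
theorem Conn.trans {s : ℕ} {a b c : α} (h : S.Conn s a b) (h' : S.Conn s b c) : S.Conn s a c :=
  Relation.EqvGen.trans _ _ _ h h'
theorem Conn.rfl {s : ℕ} {a : α} : S.Conn s a a := Relation.EqvGen.refl _
theorem Conn.mono {s s' : ℕ} (hs : s ≤ s') {a b : α} (h : S.Conn s a b) : S.Conn s' a b := by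
  induction h with
  | rel a b h =>
    rcases h with ⟨h, h'⟩ | ⟨h, h'⟩
    · exact Relation.EqvGen.rel _ _ (Or.inl ⟨h, by omega⟩)
    · exact Relation.EqvGen.rel _ _ (Or.inr ⟨h, by omega⟩)
  | refl a => exact Conn.rfl
  | symm a b _ ih => exact ih.symm
  | trans a b c _ _ ih1 ih2 => exact ih1.trans ih2

theorem P.inj {x : ℕ → α} {L : ℕ} (h : S.P x L) {i j : ℕ} (hi : i ≤ L) (hj : j ≤ L)
    (e : x i = x j) : i = j := h.2.1 i j hi hj e
theorem P.un {x : ℕ → α} {L : ℕ} (h : S.P x L) {i : ℕ} (hi : i < L) (e : i % 2 = 0) :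
    S.U (x i) (x (i+1)) := h.2.2.1 i hi e
theorem P.mt {x : ℕ → α} {L : ℕ} (h : S.P x L) {i : ℕ} (hi : i < L) (e : i % 2 = 1) :
    S.Mt (x i) (x (i+1)) := h.2.2.2 i hi e
theorem P.pre {x : ℕ → α} {L : ℕ} (h : S.P x L) {i : ℕ} (hi : i ≤ L) : S.P x i :=
  ⟨h.1, fun a b ha hb => h.2.1 a b (by omega) (by omega), fun a ha => h.2.2.1 a (by omega),
    fun a ha => h.2.2.2 a (by omega)⟩
theorem P.ev_le {x : ℕ → α} {L : ℕ} (h : S.P x L) {i : ℕ} (hi : i ≤ L) (e : i % 2 = 0) :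
    S.ev (x i) ≤ i := S.ev_le (h.pre hi) e
theorem P.od_le {x : ℕ → α} {L : ℕ} (h : S.P x L) {i : ℕ} (hi : i ≤ L) (e : i % 2 = 1) :
    S.od (x i) ≤ i := S.od_le (h.pre hi) e

theorem mt_ten {a b : α} (h : S.Mt a b) : S.ten a = S.ten b := by
  have := S.ev_mate h; have := S.ev_mate (S.Msymm h); unfold ten; omega

theorem mt_conn {a b : α} {s : ℕ} (hB : S.B s) (h : S.Mt a b) : S.Conn s a b ↔ S.ten a ≤ s := by
  have h1 := S.ev_mate h
  have h2 := S.ev_mate (S.Msymm h)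
  have h3 := mt_ten h
  constructor
  · intro hc
    by_contra hh
    have := hB a b hc (by omega) (by omega)
    subst this
    exact S.Mirr h
  · intro hh
    refine Relation.EqvGen.rel _ _ (Or.inr ⟨h, ?_⟩)
    unfold ten at hh; omega

theorem free_ten {a : α} (h : ∀ b, ¬ S.Mt a b) : S.T ≤ S.ten a ∧ S.ev a = 0 := by
  constructor
  · by_contra hh
    have hk := S.TK
    unfold ten at hh
    obtain ⟨x, hx, hxa⟩ := S.od_ex (a := a) (by omega)
    have := S.aug hx (S.od_par a) (by rw [hxa]; exact h)
    omega
  · have : S.P (fun _ => a) 0 := ⟨h, by intros; omega, by intros; omega, by intros; omega⟩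
    have := this.ev_le (i := 0) (by omega) (by omega)
    simpa using this

theorem ext_U {a b : α} (h : S.U a b) (hk : S.ev a < S.K) (hab : S.ev a ≤ S.ev b) :
    S.od b ≤ S.ev a + 1 := by
  obtain ⟨x, hx, hxa⟩ := S.ev_ex hk
  have hx : S.P x (S.ev a) := hx
  have hp := S.ev_par a
  by_cases hb : ∃ i ≤ S.ev a, x i = b
  · obtain ⟨i, hi, rfl⟩ := hb
    rcases Nat.mod_two_eq_zero_or_one i with e | e
    · have := hx.ev_le hi e
      have : i = S.ev a := by omega
      rw [this, hxa] at h
      exact absurd h S.Uirr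
    · have := hx.od_le hi e; omega
  · push Not at hb
    have : S.P (fun i => if i ≤ S.ev a then x i else b) (S.ev a + 1) := by
      refine ⟨?_, ?_, ?_, ?_⟩
      · simpa using hx.1
      · intro i j hi hj e
        by_cases h1 : i ≤ S.ev a <;> by_cases h2 : j ≤ S.ev a <;> simp only [h1, h2, if_true, if_false] at e
        · exact hx.inj h1 h2 e
        · exact absurd e (hb i h1)
        · exact absurd e.symm (hb j h2)
        · omega
      · intro i hi e
        by_cases h1 : i + 1 ≤ S.ev a
        · have h2 : i ≤ S.ev a := by omega
          simp only [h1, h2, if_true]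
          exact hx.un (by omega) e
        · have h2 : i = S.ev a := by omega
          subst h2
          simp only [h1, le_refl, if_true, if_false, hxa]
          exact h
      · intro i hi e
        have h1 : i + 1 ≤ S.ev a := by omega
        have h2 : i ≤ S.ev a := by omega
        simp only [h1, h2, if_true]
        exact hx.mt (by omega) e
    have := this.od_le (i := S.ev a + 1) le_rfl (by omega)
    simpa using this

theorem cnt_nonneg (n : ℕ) (a b : α) : 0 ≤ S.cnt n a b :=
  Finset.sum_nonneg (fun j _ => by unfold cn; split_ifs <;> simp)

theorem cnt_eq (n m : ℕ) (a b : α) (hm : m ≤ n + 1)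
    (h1 : ∀ j, m ≤ j → j ≤ n → S.Conn (2 * j) a b) :
    (n + 1 - m : ℤ) ≤ S.cnt n a b := by
  unfold cnt
  calc (n + 1 - m : ℤ) = ∑ j ∈ Finset.Ico m (n+1), (1:ℤ) := by simp [hm]
    _ ≤ ∑ j ∈ Finset.Ico m (n+1), S.cn j a b := Finset.sum_le_sum (fun j hj => by
        rw [Finset.mem_Ico] at hj
        unfold cn; rw [if_pos (h1 j hj.1 (by omega))])
    _ ≤ _ := Finset.sum_le_sum_of_subset_of_nonneg
        (by intro j; simp) (fun j _ _ => by unfold cn; split_ifs <;> simp)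

theorem cnt_le (n m : ℕ) (a b : α) (hm : m ≤ n + 1)
    (h1 : ∀ j, j < m → j ≤ n → ¬ S.Conn (2 * j) a b) :
    S.cnt n a b ≤ (n + 1 - m : ℤ) := by
  unfold cnt
  calc _ = ∑ j ∈ Finset.Ico m (n+1), S.cn j a b := by
        symm
        refine Finset.sum_subset (by intro j; simp) ?_
        intro j hj hj'
        simp only [Finset.mem_range, Finset.mem_Ico] at hj hj'
        unfold cn; rw [if_neg (h1 j (by omega) (by omega))]
    _ ≤ ∑ j ∈ Finset.Ico m (n+1), (1:ℤ) := Finset.sum_le_sum (fun j hj => by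
        unfold cn; split_ifs <;> simp)
    _ = _ := by simp [hm]

theorem cnt_U {n : ℕ} {a b : α} (h : S.U a b) :
    (2 * n + 1 : ℤ) - (S.ev a + S.ev b + 1) ≤ 2 * S.cnt n a b := by
  have ha := S.ev_par a
  have hb := S.ev_par b
  by_cases hh : S.ev a + S.ev b + 1 < 2 * n + 1
  · have := cnt_eq n ((S.ev a + S.ev b + 2) / 2) a b (by omega) (fun j hj _ =>
      Relation.EqvGen.rel _ _ (Or.inl ⟨h, by omega⟩))
    have e : (((S.ev a + S.ev b + 2) / 2 : ℕ) : ℤ) * 2 = S.ev a + S.ev b + 2 := by omega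
    omega
  · have := cnt_nonneg (S := S) n a b
    omega

theorem cnt_zero {n : ℕ} {a b : α} (h : ¬ S.Conn (2 * n) a b) : S.cnt n a b = 0 := by
  refine Finset.sum_eq_zero (fun j hj => ?_)
  rw [Finset.mem_range] at hj
  unfold cn
  rw [if_neg (fun hc => h (hc.mono (by omega)))]

theorem cnt_pos {n : ℕ} {a b : α} (h : S.Conn (2 * n) a b) : 1 ≤ S.cnt n a b := by
  have := cnt_eq n n a b (by omega) (fun j hj hj' => by
    have : j = n := by omega
    rwa [this])
  omega

theorem cnt_M {n : ℕ} {a b : α} (hB : S.Bs n) (h : S.Mt a b) :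
    (S.ten a < 2 * n + 1 → 2 * S.cnt n a b = 2 * n + 1 - S.ten a) ∧
    (2 * n + 1 ≤ S.ten a → S.cnt n a b = 0) := by
  have hp := ten_par (S := S) a
  constructor
  · intro hh
    have h1 := cnt_eq n ((S.ten a + 1) / 2) a b (by omega) (fun j hj hj' =>
      (mt_conn (hB j hj') h).2 (by omega))
    have h2 := cnt_le n ((S.ten a + 1) / 2) a b (by omega) (fun j hj hj' hc => by
      have := (mt_conn (hB j hj') h).1 hc
      omega)
    omega
  · intro hh
    exact cnt_zero (fun hc => by
      have := (mt_conn (hB n le_rfl) h).1 hc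
      omega)

theorem slackU {n : ℕ} {a b : α} (hn : 2 * n + 1 ≤ S.T) (h : S.U a b) :
    0 ≤ S.Y n a + S.Y n b + 2 + 4 * S.cnt n a b := by
  have h0 := cnt_nonneg (S := S) n a b
  have h1 := cnt_U (n := n) h
  have hk := S.TK
  have p1 := S.ev_par a
  have p2 := S.ev_par b
  unfold Y
  by_cases ha : S.isE n a <;> by_cases hb : S.isE n b <;> simp only [ha, hb, if_true, if_false]
  · omega
  · have := ext_U h
    unfold isE at ha hb
    unfold ten at ha hb
    by_cases hc : 2 * S.ev a + 2 < 2 * n + 1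
    · have := this (by omega) (by omega); omega
    · omega
  · have := ext_U (S.Usymm h)
    unfold isE at ha hb
    unfold ten at ha hb
    by_cases hc : 2 * S.ev b + 2 < 2 * n + 1
    · have := this (by omega) (by omega); omega
    · omega
  · omega

theorem slackM {n : ℕ} {a b : α} (hB : S.Bs n) (h : S.Mt a b) :
    0 ≤ 2 - S.Y n a - S.Y n b - 4 * S.cnt n a b := by
  obtain ⟨h0, h1⟩ := cnt_M (n := n) hB h
  have p1 := S.ev_mate h
  have p2 := S.ev_mate (S.Msymm h)
  unfold Y isE
  unfold ten at *
  by_cases hh : S.ev a + S.od a < 2 * n + 1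
  · have := h0 hh
    rw [if_pos (by omega), if_pos (by omega)]
    omega
  · have := h1 (by omega)
    split_ifs <;> omega

theorem TU {n : ℕ} {a b : α} (hn : 2 * n + 1 ≤ S.T) (h : S.U a b)
    (ht : S.Y n a + S.Y n b + 2 + 4 * S.cnt n a b = 0) :
    (S.Conn (2 * n) a b ∧ S.isE n a ∧ S.isE n b ∧ S.ev a + S.ev b + 1 < 2 * n + 1) ∨
    (¬ S.Conn (2 * n) a b ∧ S.isE n a ∧ S.isE n b ∧ S.ev a + S.ev b + 1 = 2 * n + 1) ∨
    (¬ S.Conn (2 * n) a b ∧ S.isE n a ∧ ¬ S.isE n b ∧ S.od b = S.ev a + 1 ∧ 2 * S.od b < 2 * n + 1) ∨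
    (¬ S.Conn (2 * n) a b ∧ ¬ S.isE n a ∧ S.isE n b ∧ S.od a = S.ev b + 1 ∧ 2 * S.od a < 2 * n + 1) := by
  have h1 := cnt_U (n := n) h
  have hk := S.TK
  have p1 := S.ev_par a
  have p2 := S.ev_par b
  have e1 := ext_U h
  have e2 := ext_U (S.Usymm h)
  unfold Y at ht
  by_cases hc : S.Conn (2 * n) a b
  · have h0 := cnt_pos hc
    by_cases ha : S.isE n a <;> by_cases hb : S.isE n b <;> simp only [ha, hb, if_true, if_false] at ht
    · left; refine ⟨hc, ha, hb, by omega⟩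
    · unfold isE ten at ha hb
      have := e1 (by omega) (by omega); omega
    · unfold isE ten at ha hb
      have := e2 (by omega) (by omega); omega
    · omega
  · have h0 := cnt_zero hc
    right
    simp only [hc, not_false_eq_true, true_and]
    by_cases ha : S.isE n a <;> by_cases hb : S.isE n b <;>
      simp only [ha, hb, if_true, if_false] at ht <;> simp only [ha, hb, true_and, false_and, not_true, not_false_eq_true, or_false, false_or]
    · omega
    · omega
    · omega
    · omega

theorem TM {n : ℕ} {a b : α} (hB : S.Bs n) (h : S.Mt a b)
    (ht : 2 - S.Y n a - S.Y n b - 4 * S.cnt n a b = 0) :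
    (S.Conn (2 * n) a b ∧ S.ten a < 2 * n + 1 ∧ S.ten b < 2 * n + 1) ∨
    (¬ S.Conn (2 * n) a b ∧ 2 * n + 1 ≤ S.ten a ∧ 2 * n + 1 ≤ S.ten b ∧ S.isE n a ∧ ¬ S.isE n b) ∨
    (¬ S.Conn (2 * n) a b ∧ 2 * n + 1 ≤ S.ten a ∧ 2 * n + 1 ≤ S.ten b ∧ ¬ S.isE n a ∧ S.isE n b) ∨
    (¬ S.Conn (2 * n) a b ∧ 2 * n + 1 ≤ S.ten a ∧ 2 * n + 1 ≤ S.ten b ∧ ¬ S.isE n a ∧ ¬ S.isE n b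
      ∧ S.od a = n ∧ S.od b = n) := by
  obtain ⟨h0, h1⟩ := cnt_M (n := n) hB h
  have p1 := S.ev_mate h
  have p2 := S.ev_mate (S.Msymm h)
  have p3 := mt_ten h
  have hc := mt_conn (hB n le_rfl) h
  by_cases hh : S.ten a < 2 * n + 1
  · left; exact ⟨hc.2 (by omega), hh, by omega⟩
  · have := h1 (by omega)
    right
    have hc' : ¬ S.Conn (2 * n) a b := fun hx => by have := hc.1 hx; omega
    simp only [hc', not_false_eq_true, true_and]
    unfold Y at ht
    by_cases ha : S.isE n a <;> by_cases hb : S.isE n b <;>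
      simp only [ha, hb, if_true, if_false] at ht <;> simp only [ha, hb, true_and, false_and, not_true, not_false_eq_true, or_false, false_or, and_true, and_false] <;>
      unfold isE at ha hb <;> unfold ten at * <;> omega

end Sys

namespace Sys
variable {α : Type*} {S : Sys α}

theorem nb_high {x : ℕ → α} {j i : ℕ} (h : 2 * j < S.ten (x i)) : ¬ S.nb x j i := fun hn => by
  have := hn i le_rfl Conn.rfl; omega

theorem nb_step {x : ℕ → α} {j i : ℕ} (hc : S.Conn (2 * j) (x i) (x (i+1)))
    (h : S.ten (x (i+1)) ≤ 2 * j) : S.nb x j (i+1) ↔ S.nb x j i := by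
  constructor
  · intro hn k hk hkc
    exact hn k (by omega) (hkc.trans hc)
  · intro hn k hk hkc
    by_cases hk' : k = i + 1
    · rw [hk']; exact h
    · exact hn k (by omega) (hkc.trans hc.symm)

theorem W_step {j : ℕ} (hB : S.B (2 * j)) {x : ℕ → α} {L i : ℕ} (hx : S.P x L) (hi : i < L) :
    S.D x j i - S.g x j i ≤ S.D x j (i+1) - S.g x j (i+1) ∧
    (S.D x j i - S.g x j i = S.D x j (i+1) - S.g x j (i+1) → i % 2 = 0 →
      ¬ S.Conn (2 * j) (x i) (x (i+1)) → ¬ S.nb x j i ∧ (S.ten (x (i+1)) ≤ 2 * j → S.nb x j (i+1))) := by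
  simp only [D]
  rcases Nat.mod_two_eq_zero_or_one i with e | e
  · have e1 : (i + 1) % 2 = 1 := by omega
    have e2 : ¬ (i % 2 = 1) := by omega
    unfold g cn
    simp only [e, e1, if_true, true_and, zero_ne_one, false_and, if_false]
    by_cases hc : S.Conn (2 * j) (x i) (x (i+1))
    · by_cases ht : S.ten (x (i+1)) ≤ 2 * j
      · simp only [hc, ht, nb_step hc ht, if_true, not_true, false_imp_iff, implies_true, and_true]
        omega
      · have h1 : ¬ S.nb x j (i+1) := nb_high (by omega)
        have h2 : S.nb x j i := by
          intro k hk hkc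
          by_contra hk'
          have := hB _ _ (hkc.trans hc) (by omega) (by omega)
          have := hx.inj (by omega) (by omega) this
          omega
        simp only [hc, ht, h1, h2, if_true, if_false, not_true, false_imp_iff, implies_true, and_true]
        omega
    · by_cases ht : S.ten (x (i+1)) ≤ 2 * j
      · by_cases h1 : S.nb x j i <;> by_cases h2 : S.nb x j (i+1) <;>
          simp [hc, ht, h1, h2]
        omega
      · have h1 : ¬ S.nb x j (i+1) := nb_high (by omega)
        by_cases h2 : S.nb x j i <;> simp [hc, ht, h1, h2]
  · have e1 : (i + 1) % 2 = 0 := by omega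
    have hm := hx.mt hi e
    have hc := mt_conn hB hm
    have ht := mt_ten hm
    refine ⟨?_, by intro _ h; omega⟩
    unfold g cn
    simp only [e, e1, if_true, true_and, zero_ne_one, false_and, if_false, one_ne_zero]
    by_cases h : S.ten (x i) ≤ 2 * j
    · simp only [hc.2 h, h, nb_step (hc.2 h) (by omega), if_true]
      omega
    · have h1 : ¬ S.nb x j (i+1) := nb_high (by omega)
      have h2 : ¬ S.nb x j i := nb_high (by omega)
      simp [mt_conn hB hm, h, h1, h2]

theorem sum_D (n : ℕ) (x : ℕ → α) (i : ℕ) : ∑ j ∈ Finset.range (n+1), S.D x j (i+1) =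
    ∑ j ∈ Finset.range (n+1), S.D x j i + (if i % 2 = 0 then - S.cnt n (x i) (x (i+1)) else S.cnt n (x i) (x (i+1))) := by
  simp only [D, Finset.sum_add_distrib, cnt]
  split_ifs <;> simp

theorem F_step {n : ℕ} (x : ℕ → α) (i : ℕ) :
    S.F n x (i+1) - S.F n x i = if i % 2 = 0 then S.Y n (x i) + S.Y n (x (i+1)) + 2 + 4 * S.cnt n (x i) (x (i+1))
      else 2 - S.Y n (x i) - S.Y n (x (i+1)) - 4 * S.cnt n (x i) (x (i+1)) := by
  unfold F
  rw [sum_D]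
  rcases Nat.mod_two_eq_zero_or_one i with e | e
  · have e1 : (i + 1) % 2 = 1 := by omega
    simp only [e, e1, if_true, one_ne_zero, if_false]; push_cast; ring
  · have e1 : (i + 1) % 2 = 0 := by omega
    simp only [e, e1, if_true, one_ne_zero, if_false]; push_cast; ring

theorem F_mono {n : ℕ} (hB : S.Bs n) (hn : 2 * n + 1 ≤ S.T) {x : ℕ → α} {L i : ℕ} (hx : S.P x L)
    (hi : i < L) : S.F n x i ≤ S.F n x (i+1) := by
  have := F_step (S := S) (n := n) x i
  split_ifs at this with e
  · have := slackU hn (hx.un hi e); omega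
  · have := slackM hB (hx.mt hi (by omega)); omega

theorem mono_le {f : ℕ → ℤ} {L : ℕ} (h : ∀ i < L, f i ≤ f (i+1)) : ∀ i j, i ≤ j → j ≤ L → f i ≤ f j := by
  intro i j hij
  induction j, hij using Nat.le_induction with
  | base => intro _; exact le_rfl
  | succ j hj ih => intro hL; exact (ih (by omega)).trans (h j (by omega))

theorem start {n : ℕ} (hn : 2 * n + 1 ≤ S.T) {x : ℕ → α} {L : ℕ} (hx : S.P x L) :
    2 * n + 1 ≤ S.ten (x 0) ∧ S.isE n (x 0) ∧ S.Y n (x 0) = - (2 * n + 1) := by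
  obtain ⟨h1, h2⟩ := free_ten hx.1
  have : S.isE n (x 0) := Or.inl (by omega)
  refine ⟨by omega, this, ?_⟩
  unfold Y; rw [if_pos this, h2]; simp

theorem tight_all {n : ℕ} (hB : S.Bs n) (hn : 2 * n + 1 ≤ S.T) {x : ℕ → α} {L : ℕ}
    (h : S.Tight n x L) : (∀ i ≤ L, S.F n x i = 0) ∧ ∀ j ≤ n, ∀ i ≤ L, S.D x j i = S.g x j i := by
  obtain ⟨hx, hL⟩ := h
  obtain ⟨s1, s2, s3⟩ := start hn hx
  have W : ∀ j ≤ n, ∀ i k, i ≤ k → k ≤ L → S.D x j i - S.g x j i ≤ S.D x j k - S.g x j k := fun j hj =>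
    mono_le (f := fun i => S.D x j i - S.g x j i) (fun i hi => (W_step (hB j hj) hx hi).1)
  have W0 : ∀ j ≤ n, S.D x j 0 - S.g x j 0 = 0 := by
    intro j hj
    have : ¬ S.nb x j 0 := nb_high (by omega)
    simp [D, g, this]
  have Fm := mono_le (f := S.F n x) (fun i hi => F_mono hB hn hx hi)
  have F0 : S.F n x 0 = 0 := by simp [F, D, s3]
  have gL : ∀ j ≤ n, 0 ≤ S.g x j L := by
    intro j hj
    have : ¬ (L % 2 = 1 ∧ S.ten (x L) ≤ 2 * j) := by omega
    unfold g; rw [if_neg this]; split_ifs <;> simp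
  have DL : ∀ j ≤ n, 0 ≤ S.D x j L := by
    intro j hj
    have := W j hj 0 L (by omega) le_rfl
    have := gL j hj
    have := W0 j hj
    omega
  have FL : S.F n x L = - 4 * ∑ j ∈ Finset.range (n+1), S.D x j L := by
    unfold F
    rcases hL with ⟨e, h⟩ | ⟨e, h, -⟩
    · simp only [e, if_true]; linarith
    · simp only [e, one_ne_zero, if_false]; linarith
  have hF := Fm 0 L (by omega) le_rfl
  have Ds : ∑ j ∈ Finset.range (n+1), S.D x j L = 0 := by
    have := Finset.sum_nonneg (s := Finset.range (n+1)) (f := fun j => S.D x j L)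
      (fun j hj => DL j (by simp at hj; omega))
    omega
  have DL0 : ∀ j ≤ n, S.D x j L = 0 := by
    intro j hj
    exact (Finset.sum_eq_zero_iff_of_nonneg (fun j hj => DL j (by simp at hj; omega))).1 Ds j
      (by simp; omega)
  constructor
  · intro i hi
    have := Fm 0 i (by omega) hi
    have := Fm i L hi le_rfl
    omega
  · intro j hj i hi
    have := W j hj 0 i (by omega) hi
    have := W j hj i L hi le_rfl
    have := gL j hj
    have := DL0 j hj
    have := W0 j hj
    omega

theorem tight_arc {n : ℕ} (hB : S.Bs n) (hn : 2 * n + 1 ≤ S.T) {x : ℕ → α} {L : ℕ}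
    (h : S.Tight n x L) {i : ℕ} (hi : i < L) :
    (i % 2 = 0 → S.Y n (x i) + S.Y n (x (i+1)) + 2 + 4 * S.cnt n (x i) (x (i+1)) = 0) ∧
    (i % 2 = 1 → 2 - S.Y n (x i) - S.Y n (x (i+1)) - 4 * S.cnt n (x i) (x (i+1)) = 0) := by
  have hF := (tight_all hB hn h).1
  have := F_step (S := S) (n := n) x i
  rw [hF i (by omega), hF (i+1) (by omega)] at this
  constructor
  · intro e; rw [if_pos e] at this; omega
  · intro e; rw [if_neg (by omega)] at this; omega

theorem tight_exit {n : ℕ} (hB : S.Bs n) (hn : 2 * n + 1 ≤ S.T) {x : ℕ → α} {L : ℕ}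
    (h : S.Tight n x L) {i : ℕ} (hi : i < L) (e : i % 2 = 0)
    (hc : ¬ S.Conn (2 * n) (x i) (x (i+1))) :
    ¬ S.nb x n i ∧ (S.ten (x (i+1)) < 2 * n + 1 → S.nb x n (i+1)) := by
  have hD := (tight_all hB hn h).2 n le_rfl
  have := (W_step (hB n le_rfl) h.1 hi).2 (by rw [hD i (by omega), hD (i+1) (by omega)]; simp) e hc
  exact ⟨this.1, fun hh => this.2 (by omega)⟩

/-- prefixes ending at high vertices are tight -/
theorem tight_honest {n : ℕ} (hB : S.Bs n) (hn : 2 * n + 1 ≤ S.T) {x : ℕ → α} {L : ℕ}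
    (h : S.Tight n x L) {i : ℕ} (hi : i ≤ L) (ht : 2 * n + 1 ≤ S.ten (x i)) :
    (i % 2 = 0 → (2 * i : ℤ) = 2 * n + 1 + S.Y n (x i)) ∧
    (i % 2 = 1 → (2 * i : ℤ) = 2 * n + 1 - S.Y n (x i)) := by
  obtain ⟨hF, hD⟩ := tight_all hB hn h
  have hF := hF i hi
  have hs : ∑ j ∈ Finset.range (n+1), S.D x j i = 0 := by
    refine Finset.sum_eq_zero (fun j hj => ?_)
    have hj : j ≤ n := by simp at hj; omega
    rw [hD j hj i hi]
    have h1 : ¬ S.nb x j i := nb_high (by omega)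
    have h2 : ¬ (i % 2 = 1 ∧ S.ten (x i) ≤ 2 * j) := by omega
    unfold g; rw [if_neg h1, if_neg h2]; simp
  unfold F at hF
  rw [hs] at hF
  constructor
  · intro e; rw [if_pos e] at hF; linarith
  · intro e; rw [if_neg (by omega)] at hF; linarith

theorem tight_final {n : ℕ} (hB : S.Bs n) (hn : 2 * n + 1 ≤ S.T) {x : ℕ → α} {L : ℕ}
    (h : S.Tight n x L) : ¬ S.nb x n L := by
  intro hnb
  have hb := nb_high (S := S) (x := x) (j := n) (i := L)
  have hF := (tight_all hB hn h).1 L le_rfl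
  rcases h.2 with ⟨e, h1⟩ | ⟨e, h1, h2⟩
  · obtain ⟨hF, hD⟩ := tight_all hB hn h
    have hF := hF L le_rfl
    have hs : 0 < ∑ j ∈ Finset.range (n+1), S.D x j L := by
      have h0 : ∀ j ≤ n, 0 ≤ S.D x j L := by
        intro j hj
        rw [hD j hj L le_rfl]
        unfold g
        have h2 : ¬ (L % 2 = 1 ∧ S.ten (x L) ≤ 2 * j) := by omega
        rw [if_neg h2]; split_ifs <;> simp
      refine Finset.sum_pos' (fun j hj => h0 j (by simp at hj; omega)) ⟨n, by simp, ?_⟩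
      rw [hD n le_rfl L le_rfl]
      unfold g
      have h2 : ¬ (L % 2 = 1 ∧ S.ten (x L) ≤ 2 * n) := by omega
      rw [if_neg h2, if_pos hnb]; simp
    unfold F at hF
    rw [if_pos e] at hF
    linarith
  · exact hb (by omega) hnb

def ph2 (S : Sys α) (n : ℕ) (x : ℕ → α) (i : ℕ) : Prop :=
  (S.ten (x i) < 2 * n + 1 ∧ S.nb x n i) ∨
  (2 * n + 1 ≤ S.ten (x i) ∧ (i % 2 = 0 → ¬ S.isE n (x i)) ∧ (i % 2 = 1 → S.isE n (x i)))

def X (S : Sys α) (n : ℕ) (x : ℕ → α) (i : ℕ) : Prop :=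
  ¬ S.Conn (2 * n) (x i) (x (i+1)) ∧ (i % 2 = 0 → S.isE n (x i) ∧ S.isE n (x (i+1))) ∧
    (i % 2 = 1 → ¬ S.isE n (x i) ∧ ¬ S.isE n (x (i+1)))

theorem low_isE {n : ℕ} {a : α} (h : S.ten a < 2 * n + 1) : S.isE n a := Or.inr h

theorem phase {n : ℕ} (hB : S.Bs n) (hn : 2 * n + 1 ≤ S.T) {x : ℕ → α} {L : ℕ}
    (h : S.Tight n x L) {i : ℕ} (hi : i < L) :
    (S.X n x i ∧ ¬ S.ph2 n x i ∧ S.ph2 n x (i+1)) ∨ (¬ S.X n x i ∧ (S.ph2 n x i ↔ S.ph2 n x (i+1))) := by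
  have ta := tight_arc hB hn h hi
  rcases Nat.mod_two_eq_zero_or_one i with e | e
  · have e1 : (i+1) % 2 = 1 := by omega
    have hu := TU hn (h.1.un hi e) (ta.1 e)
    unfold ph2 X
    simp only [e, e1, true_imp_iff, zero_ne_one, one_ne_zero, false_imp_iff, true_and, and_true]
    by_cases hc : S.Conn (2 * n) (x i) (x (i+1))
    · obtain ⟨h1, h2, -⟩ : S.isE n (x i) ∧ S.isE n (x (i+1)) ∧ True := by tauto
      right
      refine ⟨by tauto, ?_⟩
      by_cases ha : S.ten (x i) < 2 * n + 1
      · by_cases hb : S.ten (x (i+1)) < 2 * n + 1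
        · have hst := nb_step hc (by omega)
          have ha' : ¬ (2 * n + 1 ≤ S.ten (x i)) := by omega
          have hb' : ¬ (2 * n + 1 ≤ S.ten (x (i+1))) := by omega
          tauto
        · have hb' : (2 * n + 1 ≤ S.ten (x (i+1))) := by omega
          have : S.nb x n i := by
            intro k hk hkc
            by_contra hk'
            have := hB n le_rfl _ _ (hkc.trans hc) (by omega) (by omega)
            have := h.1.inj (by omega) (by omega) this
            omega
          tauto
      · have hb : S.ten (x (i+1)) < 2 * n + 1 := by
          by_contra hb
          have := hB n le_rfl _ _ hc (by omega) (by omega)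
          have := h.1.inj (by omega) (by omega) this
          omega
        have hnb : ¬ S.nb x n (i+1) := fun hnb => by
          have := hnb i (by omega) hc; omega
        have hb' : ¬ (2 * n + 1 ≤ S.ten (x (i+1))) := by omega
        tauto
    · obtain ⟨hx1, hx2⟩ := tight_exit hB hn h hi e hc
      have l1 := low_isE (S := S) (n := n) (a := x i)
      have l2 := low_isE (S := S) (n := n) (a := x (i+1))
      have c1 : S.ten (x i) < 2 * n + 1 ↔ ¬ (2 * n + 1 ≤ S.ten (x i)) := by omega
      have c2 : S.ten (x (i+1)) < 2 * n + 1 ↔ ¬ (2 * n + 1 ≤ S.ten (x (i+1))) := by omega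
      clear ta h
      by_cases t1 : 2 * n + 1 ≤ S.ten (x i) <;> by_cases t2 : 2 * n + 1 ≤ S.ten (x (i+1)) <;>
        simp only [c1, c2, t1, t2, not_true, not_false_eq_true, true_and, false_and, true_imp_iff,
          false_imp_iff, false_or, or_false, hc] at * <;>
        by_cases i1 : S.isE n (x i) <;> by_cases i2 : S.isE n (x (i+1)) <;> simp_all
  · have e1 : (i+1) % 2 = 0 := by omega
    have hu := TM hB (h.1.mt hi e) (ta.2 e)
    have hst := nb_step (S := S) (x := x) (j := n) (i := i)
    unfold ph2 X
    simp only [e, e1, true_imp_iff, zero_ne_one, one_ne_zero, false_imp_iff, true_and, and_true]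
    have c1 : S.ten (x i) < 2 * n + 1 ↔ ¬ (2 * n + 1 ≤ S.ten (x i)) := by omega
    have c2 : S.ten (x (i+1)) < 2 * n + 1 ↔ ¬ (2 * n + 1 ≤ S.ten (x (i+1))) := by omega
    have c3 : S.ten (x (i+1)) < 2 * n + 1 → S.ten (x (i+1)) ≤ 2 * n := by omega
    have l1 := low_isE (S := S) (n := n) (a := x i)
    have l2 := low_isE (S := S) (n := n) (a := x (i+1))
    clear ta h
    rcases hu with ⟨u1, u2, u3⟩ | ⟨u1, u2, u3, u4, u5⟩ | ⟨u1, u2, u3, u4, u5⟩ | ⟨u1, u2, u3, u4, u5, -⟩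
    · have hst := hst u1 (by omega)
      have d1 : ¬ (2 * n + 1 ≤ S.ten (x i)) := by omega
      have d2 : ¬ (2 * n + 1 ≤ S.ten (x (i+1))) := by omega
      simp only [u1, u2, u3, d1, d2, hst, not_true, false_and, or_false, not_false_eq_true, iff_self, and_self, or_true]
    all_goals
      simp only [c1, c2, u1, u2, u3, u4, u5, not_true, not_false_eq_true, true_and, false_and, false_or, or_false, iff_self, and_self, and_true, and_false]

theorem ph_start {n : ℕ} (hn : 2 * n + 1 ≤ S.T) {x : ℕ → α} {L : ℕ} (hx : S.P x L) : ¬ S.ph2 n x 0 := by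
  obtain ⟨s1, s2, s3⟩ := start hn hx
  rintro (⟨h, -⟩ | ⟨-, h, -⟩)
  · omega
  · exact h rfl s2

theorem ph_mono {n : ℕ} (hB : S.Bs n) (hn : 2 * n + 1 ≤ S.T) {x : ℕ → α} {L : ℕ}
    (h : S.Tight n x L) {i : ℕ} : ∀ j, i ≤ j → j ≤ L → S.ph2 n x i → S.ph2 n x j := by
  intro j hij
  induction j, hij using Nat.le_induction with
  | base => intro _; exact id
  | succ j hj ih =>
    intro hL hp
    have := ih (by omega) hp
    rcases phase hB hn h (i := j) (by omega) with ⟨_, h2, _⟩ | ⟨_, h2⟩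
    · exact absurd this h2
    · exact h2.1 this

/-- exactly one X arc -/
theorem uniqueX {n : ℕ} (hB : S.Bs n) (hn : 2 * n + 1 ≤ S.T) {x : ℕ → α} {L : ℕ}
    (h : S.Tight n x L) (hL : S.ph2 n x L) :
    ∃ m < L, S.X n x m ∧ (∀ i ≤ m, ¬ S.ph2 n x i) ∧ (∀ i, m < i → i ≤ L → S.ph2 n x i) ∧
      ∀ m' < L, S.X n x m' → m' = m := by
  have hex : ∃ i, S.ph2 n x i := ⟨L, hL⟩
  have h0 := ph_start hn h.1
  set k := Nat.find hex with hk
  have k1 : S.ph2 n x k := Nat.find_spec hex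
  have k2 : ∀ i < k, ¬ S.ph2 n x i := fun i hi => Nat.find_min hex hi
  have k3 : k ≤ L := Nat.find_min' hex hL
  have k0 : k ≠ 0 := fun e => h0 (e ▸ k1)
  obtain ⟨m, hm⟩ : ∃ m, k = m + 1 := ⟨k - 1, by omega⟩
  have hXX := phase hB hn h (i := m) (by omega)
  rw [← hm] at hXX
  have hm2 := k2 m (by omega)
  have up : ∀ i, m < i → i ≤ L → S.ph2 n x i := fun i hi hiL => ph_mono hB hn h i (by omega) hiL k1
  refine ⟨m, by omega, by tauto, fun i hi => k2 i (by omega), up, ?_⟩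
  intro m' hm' hX'
  have := phase hB hn h hm'
  by_contra hne
  rcases Nat.lt_or_gt_of_ne hne with hlt | hgt
  · have := k2 (m'+1) (by omega); tauto
  · have := up m' hgt (by omega); tauto

end Sys

namespace Sys
variable {α : Type*} {S : Sys α}

def MinP (S : Sys α) (n : ℕ) (x : ℕ → α) (L : ℕ) : Prop :=
  S.P x L ∧ ((L % 2 = 0 ∧ S.isE n (x L) ∧ L = S.ev (x L)) ∨
    (L % 2 = 1 ∧ ¬ S.isE n (x L) ∧ L = S.od (x L) ∧ 2 * L < 2 * n + 1))

theorem MinP.tight {n : ℕ} {x : ℕ → α} {L : ℕ} (h : S.MinP n x L) : S.Tight n x L := by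
  refine ⟨h.1, ?_⟩
  rcases h.2 with ⟨e, h1, h2⟩ | ⟨e, h1, h2, h3⟩
  · left; refine ⟨e, ?_⟩; unfold Y; rw [if_pos h1]; omega
  · right; refine ⟨e, ?_, ?_⟩
    · unfold Y; rw [if_neg h1]; omega
    · unfold isE at h1; omega

theorem MinP.ph1 {n : ℕ} (hB : S.Bs n) (hn : 2 * n + 1 ≤ S.T) {x : ℕ → α} {L : ℕ}
    (h : S.MinP n x L) {i : ℕ} (hi : i ≤ L) : ¬ S.ph2 n x i := by
  have hL : ¬ S.ph2 n x L := by
    have hf := tight_final hB hn h.tight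
    rintro (⟨h1, h2⟩ | ⟨h1, h2, h3⟩)
    · exact hf h2
    · rcases h.2 with ⟨e, h4, -⟩ | ⟨e, h4, -⟩
      · exact h2 e h4
      · exact h4 (h3 e)
  exact fun hp => hL (ph_mono hB hn h.tight L hi le_rfl hp)

theorem MinP.pre {n : ℕ} (hB : S.Bs n) (hn : 2 * n + 1 ≤ S.T) {x : ℕ → α} {L : ℕ}
    (h : S.MinP n x L) {i : ℕ} (hi : i ≤ L) (ht : 2 * n + 1 ≤ S.ten (x i)) : S.MinP n x i := by
  refine ⟨h.1.pre hi, ?_⟩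
  have hh := tight_honest hB hn h.tight hi ht
  have hp := h.ph1 hB hn hi
  rcases Nat.mod_two_eq_zero_or_one i with e | e
  · have hE : S.isE n (x i) := by
      by_contra hE
      exact hp (Or.inr ⟨ht, fun _ => hE, by omega⟩)
    have := hh.1 e
    unfold Y at this; rw [if_pos hE] at this
    exact Or.inl ⟨e, hE, by omega⟩
  · have hE : ¬ S.isE n (x i) := by
      intro hE
      exact hp (Or.inr ⟨ht, by omega, fun _ => hE⟩)
    have := hh.2 e
    unfold Y at this; rw [if_neg hE] at this
    exact Or.inr ⟨e, hE, by omega, by omega⟩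

theorem MinP.len_eq {n : ℕ} {x y : ℕ → α} {a c : ℕ}
    (h : S.MinP n x a) (h' : S.MinP n y c) (e : x a = y c) : a = c := by
  have h1 := h.2
  have h2 := h'.2
  rw [e] at h1
  rcases h1 with ⟨_, h3, h4⟩ | ⟨_, h3, h4, _⟩ <;> rcases h2 with ⟨_, h5, h6⟩ | ⟨_, h5, h6, _⟩
  · omega
  · exact absurd h3 h5
  · exact absurd h5 h3
  · omega

theorem MinP.pos_eq {n : ℕ} (hB : S.Bs n) (hn : 2 * n + 1 ≤ S.T) {x y : ℕ → α} {a c : ℕ}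
    (h : S.MinP n x a) (h' : S.MinP n y c) {i j : ℕ} (hi : i ≤ a) (hj : j ≤ c) (e : x i = y j)
    (ht : 2 * n + 1 ≤ S.ten (x i)) : i = j :=
  (h.pre hB hn hi ht).len_eq (h'.pre hB hn hj (e ▸ ht)) e

theorem MinP.base {n : ℕ} (hB : S.Bs n) (hn : 2 * n + 1 ≤ S.T) {x : ℕ → α} {L : ℕ}
    (h : S.MinP n x L) {i : ℕ} (hi : i ≤ L) :
    ∃ k ≤ i, 2 * n + 1 ≤ S.ten (x k) ∧ S.Conn (2 * n) (x k) (x i) := by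
  by_cases ht : 2 * n + 1 ≤ S.ten (x i)
  · exact ⟨i, le_rfl, ht, Conn.rfl⟩
  · have hp := h.ph1 hB hn hi
    have : ¬ S.nb x n i := fun hnb => hp (Or.inl ⟨by omega, hnb⟩)
    unfold nb at this
    push Not at this
    obtain ⟨k, hk, hc, hk'⟩ := this
    exact ⟨k, hk, by omega, hc⟩

theorem MinP.contig {n : ℕ} (hB : S.Bs n) (hn : 2 * n + 1 ≤ S.T) {x : ℕ → α} {L : ℕ}
    (h : S.MinP n x L) {k i : ℕ} (hi : i ≤ L) (ht : 2 * n + 1 ≤ S.ten (x k))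
    (hki : k ≤ i) (hc : S.Conn (2 * n) (x k) (x i)) :
    ∀ m, k ≤ m → m ≤ i → S.Conn (2 * n) (x k) (x m) := by
  have key : ∀ d, ∀ m, k ≤ m → m + d = i → S.Conn (2 * n) (x k) (x m) := by
    intro d
    induction d with
    | zero => intro m _ e; have : m = i := by omega
              rw [this]; exact hc
    | succ d ih =>
      intro m hm e
      have h1 := ih (m+1) (by omega) (by omega)
      have h2 : S.ten (x (m+1)) < 2 * n + 1 := by
        by_contra h2
        have := hB n le_rfl _ _ h1 (by omega) (by omega)
        have := h.1.inj (by omega) (by omega) this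
        omega
      by_contra hcon
      have h3 : ¬ S.Conn (2 * n) (x m) (x (m+1)) := fun h3 => hcon (h1.trans h3.symm)
      rcases Nat.mod_two_eq_zero_or_one m with e' | e'
      · have := (tight_exit hB hn h.tight (by omega) e' h3).2 h2 k (by omega) h1
        omega
      · have hm := h.1.mt (i := m) (by omega) e'
        have := mt_ten hm
        exact h3 ((mt_conn (hB n le_rfl) hm).2 (by omega))
  intro m hm hmi
  exact key (i - m) m hm (by omega)

/-- last vertex of tenacity > 2n+1 is at index β -/
def LH (S : Sys α) (n : ℕ) (x : ℕ → α) (L : ℕ) (β : ℕ) : Prop :=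
  β ≤ L ∧ 2 * n + 1 < S.ten (x β) ∧ ∀ i, β < i → i ≤ L → S.ten (x i) ≤ 2 * n + 1

theorem LH_ex {n : ℕ} (hT : 2 * n + 1 < S.T) {x : ℕ → α} {L : ℕ} (hx : S.P x L) : ∃ β, S.LH n x L β := by
  have h0 : 2 * n + 1 < S.ten (x 0) := by have := (free_ten hx.1).1; omega
  clear hx
  induction L with
  | zero => exact ⟨0, le_rfl, h0, by intros; omega⟩
  | succ L ih =>
    obtain ⟨β, h1, h2, h3⟩ := ih
    by_cases hL : 2 * n + 1 < S.ten (x (L+1))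
    · exact ⟨L+1, le_rfl, hL, by intros; omega⟩
    · refine ⟨β, by omega, h2, ?_⟩
      intro i hi hi'
      by_cases e : i = L + 1
      · rw [e]; omega
      · exact h3 i hi (by omega)

def UniqLH (S : Sys α) (n : ℕ) (z : α) : Prop :=
  ∀ x y a c β γ, S.MinP n x a → S.MinP n y c → x a = z → y c = z → S.LH n x a β → S.LH n y c γ →
    x β = y γ

theorem disj {n : ℕ} (hB : S.Bs n) (hn : 2 * n + 1 ≤ S.T) {x y : ℕ → α} {a c : ℕ}
    (h : S.MinP n x a) (h' : S.MinP n y c) {β : ℕ} (ht : 2 * n + 1 ≤ S.ten (x β))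
    (hno : ∀ k, β ≤ k → k ≤ a → k ≤ c → x k = y k → ¬ 2 * n + 1 ≤ S.ten (x k))
    {i j : ℕ} (hi : β ≤ i) (hia : i ≤ a) (hj : j ≤ c) : x i ≠ y j := by
  intro e
  obtain ⟨k, hk, hk1, hk2⟩ := h.base hB hn hia
  obtain ⟨l, hl, hl1, hl2⟩ := h'.base hB hn hj
  rw [← e] at hl2
  have e1 := hB n le_rfl _ _ (hk2.trans hl2.symm) (by omega) (by omega)
  have e2 := h.pos_eq hB hn h' (by omega) (by omega) e1 hk1
  subst e2
  by_cases hkb : β ≤ k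
  · exact hno k hkb (by omega) (by omega) e1 hk1
  · have := h.contig hB hn hia hk1 hk hk2 β (by omega) hi
    have := hB n le_rfl _ _ this (by omega) (by omega)
    have := h.1.inj (by omega) (by omega) this
    omega

/-- joining `y[0..c]`, the edge `y c - x a`, and `x` reversed from `a` to `β`. -/
theorem join {x y : ℕ → α} {a c β : ℕ} (hx : S.P x a) (hy : S.P y c) (hpar : a % 2 = c % 2)
    (h0 : a % 2 = 0 → S.U (x a) (y c)) (h1 : a % 2 = 1 → S.Mt (x a) (y c)) (hβ : β ≤ a)
    (hd : ∀ i j, β ≤ i → i ≤ a → j ≤ c → x i ≠ y j) :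
    S.P (fun i => if i ≤ c then y i else x (a + c + 1 - i)) (a + c + 1 - β) := by
  refine ⟨?_, ?_, ?_, ?_⟩
  · simpa using hy.1
  · intro i j hi hj e
    by_cases e1 : i ≤ c <;> by_cases e2 : j ≤ c <;> simp only [e1, e2, if_true, if_false] at e
    · exact hy.inj e1 e2 e
    · exact absurd e.symm (hd _ _ (by omega) (by omega) e1)
    · exact absurd e (hd _ _ (by omega) (by omega) e2)
    · have := hx.inj (by omega) (by omega) e
      omega
  · intro i hi e
    rcases lt_trichotomy i c with hh | hh | hh
    · have e1 : i ≤ c := by omega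
      have e2 : i + 1 ≤ c := by omega
      simp only [e1, e2, if_true]
      exact hy.un (by omega) e
    · subst hh
      have e2 : ¬ (i + 1 ≤ i) := by omega
      have e3 : a + i + 1 - (i + 1) = a := by omega
      simp only [le_refl, e2, if_true, if_false, e3]
      exact S.Usymm (h0 (by omega))
    · have e1 : ¬ i ≤ c := by omega
      have e2 : ¬ i + 1 ≤ c := by omega
      simp only [e1, e2, if_false]
      have := hx.un (i := a + c + 1 - (i + 1)) (by omega) (by omega)
      have e3 : a + c + 1 - (i+1) + 1 = a + c + 1 - i := by omega
      rw [e3] at this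
      exact S.Usymm this
  · intro i hi e
    rcases lt_trichotomy i c with hh | hh | hh
    · have e1 : i ≤ c := by omega
      have e2 : i + 1 ≤ c := by omega
      simp only [e1, e2, if_true]
      exact hy.mt (by omega) e
    · subst hh
      have e2 : ¬ (i + 1 ≤ i) := by omega
      have e3 : a + i + 1 - (i + 1) = a := by omega
      simp only [le_refl, e2, if_true, if_false, e3]
      exact S.Msymm (h1 (by omega))
    · have e1 : ¬ i ≤ c := by omega
      have e2 : ¬ i + 1 ≤ c := by omega
      simp only [e1, e2, if_false]
      have := hx.mt (i := a + c + 1 - (i + 1)) (by omega) (by omega)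
      have e3 : a + c + 1 - (i+1) + 1 = a + c + 1 - i := by omega
      rw [e3] at this
      exact S.Msymm this

theorem common {n : ℕ} (hB : S.Bs n) (hn : 2 * n + 1 ≤ S.T) {x y : ℕ → α} {a c : ℕ}
    (h : S.MinP n x a) (h' : S.MinP n y c) (hpar : a % 2 = c % 2) (hac : a + c + 1 = 2 * n + 1)
    (h0 : a % 2 = 0 → S.U (x a) (y c)) (h1 : a % 2 = 1 → S.Mt (x a) (y c)) {β : ℕ}
    (hβ : S.LH n x a β) : ∃ k, β ≤ k ∧ k ≤ a ∧ k ≤ c ∧ x k = y k ∧ 2 * n + 1 ≤ S.ten (x k) := by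
  by_contra hcon
  push Not at hcon
  obtain ⟨b1, b2, b3⟩ := hβ
  have hp := join h.1 h'.1 hpar h0 h1 b1 (fun i j hi hia hj =>
    disj hB hn h h' (by omega) (fun k k1 k2 k3 k4 => by have := hcon k k1 k2 k3 k4; omega) hi hia hj)
  have e1 : ¬ (a + c + 1 - β ≤ c) := by omega
  have e2 : a + c + 1 - (a + c + 1 - β) = β := by omega
  have hpre := (h.pre hB hn b1 (by omega)).2
  unfold ten at b2
  rcases hpre with ⟨e, _, hl⟩ | ⟨e, _, hl, _⟩
  · have := hp.od_le le_rfl (by omega)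
    simp only [e1, e2, if_false] at this
    omega
  · have := hp.ev_le le_rfl (by omega)
    simp only [e1, e2, if_false] at this
    omega

theorem pair {n : ℕ} (hB : S.Bs n) (hn : 2 * n + 1 ≤ S.T) {x y : ℕ → α} {a c : ℕ}
    (h : S.MinP n x a) (h' : S.MinP n y c) (hpar : a % 2 = c % 2) (hac : a + c + 1 = 2 * n + 1)
    (h0 : a % 2 = 0 → S.U (x a) (y c)) (h1 : a % 2 = 1 → S.Mt (x a) (y c)) {β γ : ℕ}
    (hβ : S.LH n x a β) (hγ : S.LH n y c γ)
    (hU : ∀ k, k ≤ a → k ≤ c → x k = y k → S.ten (x k) = 2 * n + 1 → S.UniqLH n (x k)) :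
    x β = y γ := by
  obtain ⟨k1, p1, p2, p3, p4, p5⟩ := common hB hn h h' hpar hac h0 h1 hβ
  obtain ⟨k2, q1, q2, q3, q4, q5⟩ := common hB hn h' h hpar.symm (by omega)
    (fun e => S.Usymm (h0 (by omega))) (fun e => S.Msymm (h1 (by omega))) hγ
  have key : ∀ k, β ≤ k → γ ≤ k → k ≤ a → k ≤ c → x k = y k → 2 * n + 1 ≤ S.ten (x k) → x β = y γ := by
    intro k k1 k2 k3 k4 k5 k6
    obtain ⟨b1, b2, b3⟩ := hβ
    obtain ⟨c1, c2, c3⟩ := hγ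
    by_cases hh : S.ten (x k) = 2 * n + 1
    · refine hU k k3 k4 k5 hh x y k k β γ (h.pre hB hn k3 k6) (h'.pre hB hn k4 (k5 ▸ k6)) rfl k5.symm ?_ ?_
      · exact ⟨k1, b2, fun i hi hi' => b3 i hi (by omega)⟩
      · exact ⟨k2, c2, fun i hi hi' => c3 i hi (by omega)⟩
    · have e1 : β = k := by
        by_contra hne
        have := b3 k (by omega) k3; omega
      have e2 : γ = k := by
        by_contra hne
        have := c3 k (by omega) k4
        rw [← k5] at this; omega
      rw [e1, e2, k5]
  rcases le_total k1 k2 with hh | hh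
  · exact key k2 (by omega) q1 (by omega) (by omega) q4.symm (q4 ▸ q5)
  · exact key k1 p1 (by omega) (by omega) (by omega) p4 p5

/-- a level-achieving path of the larger level to a vertex of tenacity 2n+1 -/
theorem max_tight {n : ℕ} {x : ℕ → α} {L : ℕ} (hx : S.P x L)
    (ht : S.ten (x L) = 2 * n + 1) (hL : n < L)
    (hl : (L % 2 = 0 ∧ L = S.ev (x L)) ∨ (L % 2 = 1 ∧ L = S.od (x L))) :
    S.Tight n x L ∧ S.ph2 n x L := by
  have hE : S.isE n (x L) ↔ L % 2 = 1 := by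
    unfold isE
    unfold ten at *
    omega
  refine ⟨⟨hx, ?_⟩, Or.inr ⟨by omega, ?_, ?_⟩⟩
  · rcases hl with ⟨e, h⟩ | ⟨e, h⟩
    · left; refine ⟨e, ?_⟩
      have : ¬ S.isE n (x L) := by rw [hE]; omega
      unfold Y; rw [if_neg this]; unfold ten at ht; omega
    · right; refine ⟨e, ?_, by omega⟩
      have : S.isE n (x L) := by rw [hE]; omega
      unfold Y; rw [if_pos this]; unfold ten at ht; omega
  · intro e; rw [hE]; omega
  · intro e; rw [hE]; omega

theorem ph2_level {n : ℕ} (hB : S.Bs n) (hn : 2 * n + 1 ≤ S.T) {x : ℕ → α} {L : ℕ}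
    (h : S.Tight n x L) {j : ℕ} (hj : j ≤ L) (hp : S.ph2 n x j) (ht : 2 * n + 1 ≤ S.ten (x j)) :
    (j % 2 = 0 ∧ ¬ S.isE n (x j) ∧ S.od (x j) + j = 2 * n + 1 ∧ S.ten (x j) = 2 * n + 1) ∨
    (j % 2 = 1 ∧ S.isE n (x j) ∧ S.ev (x j) + j = 2 * n + 1 ∧ S.ten (x j) = 2 * n + 1) := by
  have hh := tight_honest hB hn h hj ht
  rcases hp with ⟨h1, _⟩ | ⟨-, h1, h2⟩
  · omega
  · rcases Nat.mod_two_eq_zero_or_one j with e | e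
    · left
      have h3 := hh.1 e
      have := h.1.ev_le hj e
      unfold Y at h3; rw [if_neg (h1 e)] at h3
      unfold ten at *
      exact ⟨e, h1 e, by omega, by omega⟩
    · right
      have h3 := hh.2 e
      have := h.1.od_le hj e
      unfold Y at h3; rw [if_pos (h2 e)] at h3
      unfold ten at *
      exact ⟨e, h2 e, by omega, by omega⟩

theorem later_base {n : ℕ} (hB : S.Bs n) (hn : 2 * n + 1 ≤ S.T) {x : ℕ → α} {L : ℕ}
    (h : S.Tight n x L) (hL : 2 * n + 1 ≤ S.ten (x L)) :
    ∀ d j, j + d = L → S.ph2 n x j → ∃ l, j ≤ l ∧ l ≤ L ∧ 2 * n + 1 ≤ S.ten (x l) ∧ S.Conn (2 * n) (x j) (x l) := by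
  intro d
  induction d with
  | zero => intro j e _; exact ⟨j, le_rfl, by omega, by rwa [show j = L by omega], Conn.rfl⟩
  | succ d ih =>
    intro j e hp
    by_cases ht : 2 * n + 1 ≤ S.ten (x j)
    · exact ⟨j, le_rfl, by omega, ht, Conn.rfl⟩
    · have hnb : S.nb x n j := by
        rcases hp with ⟨_, h2⟩ | ⟨h1, _⟩
        · exact h2
        · omega
      have hc : S.Conn (2 * n) (x j) (x (j+1)) := by
        by_contra hc
        rcases Nat.mod_two_eq_zero_or_one j with e' | e'
        · exact (tight_exit hB hn h (by omega) e' hc).1 hnb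
        · exact hc ((mt_conn (hB n le_rfl) (h.1.mt (by omega) e')).2 (by omega))
      obtain ⟨l, l1, l2, l3, l4⟩ := ih (j+1) (by omega) (ph_mono hB hn h (j+1) (by omega) (by omega) hp)
      exact ⟨l, by omega, l2, l3, hc.trans l4⟩

end Sys

namespace Sys
variable {α : Type*} {S : Sys α}

theorem X_lev {n : ℕ} (hB : S.Bs n) (hn : 2 * n + 1 ≤ S.T) {x : ℕ → α} {L : ℕ}
    (h : S.Tight n x L) {m : ℕ} (hm : m < L) (hX : S.X n x m) :
    (m % 2 = 0 ∧ S.isE n (x m) ∧ S.isE n (x (m+1)) ∧ S.ev (x m) + S.ev (x (m+1)) + 1 = 2 * n + 1) ∨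
    (m % 2 = 1 ∧ ¬ S.isE n (x m) ∧ ¬ S.isE n (x (m+1)) ∧ S.od (x m) = n ∧ S.od (x (m+1)) = n) := by
  obtain ⟨ta, tb⟩ := tight_arc hB hn h hm
  obtain ⟨h1, h2, h3⟩ := hX
  rcases Nat.mod_two_eq_zero_or_one m with e | e
  · left
    have := h2 e
    rcases TU hn (h.1.un hm e) (ta e) with g | g | g | g
    · exact absurd g.1 h1
    · exact ⟨e, g.2⟩
    · exact absurd this.2 g.2.2.1
    · exact absurd this.1 g.2.1
  · right
    have := h3 e
    rcases TM hB (h.1.mt hm e) (tb e) with g | g | g | g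
    · exact absurd g.1 h1
    · exact absurd g.2.2.2.1 this.1
    · exact absurd g.2.2.2.2 this.2
    · exact ⟨e, g.2.2.2⟩

theorem half {n : ℕ} (hB : S.Bs n) (hn : 2 * n + 1 ≤ S.T) {p : ℕ → α} {L m : ℕ} {z : α}
    (ht : S.ten z = 2 * n + 1) (hpz : p L = z) (hp : S.Tight n p L) (hL : n < L)
    (hm : m < L) (hX : S.X n p m) (hph : ∀ i, m < i → i ≤ L → S.ph2 n p i)
    (hl : (L % 2 = 0 ∧ L = S.ev (p L)) ∨ (L % 2 = 1 ∧ L = S.od (p L)))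
    {s : ℕ → α} {h : ℕ} (hs : S.MinP n s h) (hsz : s h = z)
    (IH : ∀ z', S.ten z' = 2 * n + 1 → min (S.ev z') (S.od z') < h → S.UniqLH n z')
    {β γ : ℕ} (hβ : S.LH n s h β) (hγ : S.LH n p m γ) : p γ = s β := by
  subst hpz
  have hhL : h + L = 2 * n + 1 := by
    have := hs.2
    rw [hsz] at this
    unfold ten at ht
    rcases this with ⟨e, h1, h2⟩ | ⟨e, h1, h2, h3⟩
    · unfold isE ten at h1; omega
    · omega
  have clA : ∀ k l, k ≤ h → m < l → l ≤ L → 2 * n + 1 ≤ S.ten (p l) → s k = p l → k + l = 2 * n + 1 := by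
    intro k l hk hml hl ht' e
    have h1 := ph2_level hB hn hp hl (hph l hml hl) ht'
    have h2 := (hs.pre hB hn hk (by rw [e]; exact ht')).2
    rw [e] at h2
    rcases h1 with ⟨a1, a2, a3, a4⟩ | ⟨a1, a2, a3, a4⟩ <;> rcases h2 with ⟨b1, b2, b3⟩ | ⟨b1, b2, b3, b4⟩
    · exact absurd b2 a2
    · omega
    · omega
    · exact absurd a2 b2
  have hd : ∀ i j, m < j → j < L → i ≤ h → s i ≠ p j := by
    intro i j hmj hjL hi e
    obtain ⟨k, k1, k2, k3⟩ := hs.base hB hn hi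
    obtain ⟨l, l1, l2, l3, l4⟩ := later_base hB hn hp (by omega) (L - j) j (by omega) (hph j hmj (by omega))
    rw [← e] at l4
    have e1 := hB n le_rfl _ _ (k3.trans l4) (by omega) (by omega)
    have := clA k l (by omega) (by omega) l2 l3 e1
    have e2 : i = h := by omega
    rw [e2, hsz] at e
    have := hp.1.inj le_rfl (by omega) e
    omega
  obtain ⟨Q, hQ⟩ : ∃ Q : ℕ → α, Q = fun i => if i ≤ h then s i else p (L - 1 + h + 1 - i) := ⟨_, rfl⟩
  obtain ⟨c, hc⟩ : ∃ c, c = 2 * n - m := ⟨_, rfl⟩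
  have hQs : ∀ i ≤ h, Q i = s i := by intro i hi; rw [hQ]; simp [hi]
  have hQp : ∀ i, h ≤ i → i ≤ L + h → Q i = p (L + h - i) := by
    intro i hi hi'
    by_cases e : i = h
    · subst e; rw [hQs _ le_rfl, hsz]; congr 1; omega
    · rw [hQ]; simp only [show ¬ i ≤ h by omega, if_false]; congr 1; omega
  have hmh : h ≤ c := by omega
  have hPQ : S.P Q c := by
    by_cases e : m + 1 = L
    · have : c = h := by omega
      rw [this]
      refine ⟨?_, ?_, ?_, ?_⟩
      · rw [hQs 0 (by omega)]; exact hs.1.1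
      · intro i j hi hj; rw [hQs i hi, hQs j hj]; exact hs.1.inj hi hj
      · intro i hi e; rw [hQs i (by omega), hQs (i+1) (by omega)]; exact hs.1.un hi e
      · intro i hi e; rw [hQs i (by omega), hQs (i+1) (by omega)]; exact hs.1.mt hi e
    · have := join (x := p) (y := s) (a := L - 1) (c := h) (β := m + 1) (hp.1.pre (by omega)) hs.1 (by omega)
        (fun e => by
          have := hp.1.un (i := L - 1) (by omega) e
          rwa [show L - 1 + 1 = L by omega, ← hsz] at this)
        (fun e => by
          have := hp.1.mt (i := L - 1) (by omega) e
          rwa [show L - 1 + 1 = L by omega, ← hsz] at this)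
        (by omega) (fun i j hi hia hj => (hd j i (by omega) (by omega) hj).symm)
      rw [hQ]
      convert this using 1
      omega
  have hQc : Q c = p (m+1) := by rw [hQp c hmh (by omega)]; congr 1; omega
  have hX' := X_lev hB hn hp hm hX
  have hmm : S.MinP n p m ∧ S.MinP n Q c := by
    rcases hX' with ⟨e, e1, e2, e3⟩ | ⟨e, e1, e2, e3, e4⟩
    · have a1 := hp.1.ev_le (i := m) (by omega) e
      have a2 := hPQ.ev_le (i := c) le_rfl (by omega)
      rw [hQc] at a2
      exact ⟨⟨hp.1.pre (by omega), Or.inl ⟨e, e1, by omega⟩⟩,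
        ⟨hPQ, Or.inl ⟨by omega, by rw [hQc]; exact e2, by rw [hQc]; omega⟩⟩⟩
    · have a1 := hp.1.od_le (i := m) (by omega) e
      have a2 := hPQ.od_le (i := c) le_rfl (by omega)
      rw [hQc] at a2
      exact ⟨⟨hp.1.pre (by omega), Or.inr ⟨e, e1, by omega, by omega⟩⟩,
        ⟨hPQ, Or.inr ⟨by omega, by rw [hQc]; exact e2, by rw [hQc]; omega, by omega⟩⟩⟩
  have hLQ : S.LH n Q c β := by
    obtain ⟨b1, b2, b3⟩ := hβ
    refine ⟨by omega, by rw [hQs β b1]; exact b2, ?_⟩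
    intro i hi hi'
    by_cases hih : i ≤ h
    · rw [hQs i hih]; exact b3 i hi hih
    · rw [hQp i (by omega) (by omega)]
      by_contra hh
      have := ph2_level hB hn hp (j := L + h - i) (by omega) (hph _ (by omega) (by omega)) (by omega)
      omega
  have := pair hB hn hmm.1 hmm.2 (by omega) (by omega)
    (fun e => by rw [hQc]; exact hp.1.un hm e) (fun e => by rw [hQc]; exact hp.1.mt hm e) hγ hLQ
    (fun k k1 k2 k3 k4 => by
      refine IH _ k4 ?_
      have hkh : k < h := by
        by_contra hkh
        rw [hQp k (by omega) (by omega)] at k3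
        have := hp.1.inj (by omega) (by omega) k3
        omega
      have := (hmm.1.pre hB hn k1 (by omega)).2
      omega)
  rw [this, hQs β hβ.1]

theorem minP_min {n : ℕ} {s : ℕ → α} {h : ℕ} (hs : S.MinP n s h) (ht : 2 * n + 1 ≤ S.ten (s h)) :
    h = min (S.ev (s h)) (S.od (s h)) := by
  rcases hs.2 with ⟨e, h1, h2⟩ | ⟨e, h1, h2, h3⟩
  · unfold isE at h1; unfold ten at *; omega
  · unfold isE at h1; unfold ten at *; omega

theorem claim1 {n : ℕ} (hB : S.Bs n) (hT : 2 * n + 1 < S.T) :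
    ∀ N z, S.ten z = 2 * n + 1 → min (S.ev z) (S.od z) < N → S.UniqLH n z := by
  intro N
  induction N with
  | zero => intro z _ h; omega
  | succ N IH =>
    intro z hz hN
    have hk := S.TK
    have p1 := S.ev_par z
    have p2 := S.od_par z
    have hex : ∃ L p, S.P p L ∧ p L = z ∧ n < L ∧ ((L % 2 = 0 ∧ L = S.ev (p L)) ∨ (L % 2 = 1 ∧ L = S.od (p L))) := by
      have hz' := hz
      unfold ten at hz'
      by_cases h : n < S.ev z
      · obtain ⟨p, h1, h2⟩ := S.ev_ex (a := z) (by omega)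
        exact ⟨_, p, h1, h2, h, Or.inl ⟨p1, by rw [h2]⟩⟩
      · obtain ⟨p, h1, h2⟩ := S.od_ex (a := z) (by omega)
        exact ⟨_, p, h1, h2, by omega, Or.inr ⟨p2, by rw [h2]⟩⟩
    obtain ⟨L, p, hp, hpz, hL, hl⟩ := hex
    obtain ⟨t1, t2⟩ := max_tight hp (by rw [hpz]; exact hz) hL hl
    obtain ⟨m, hm, hX, -, hph, -⟩ := uniqueX hB (by omega) t1 t2
    obtain ⟨γ, hγ⟩ := LH_ex (n := n) hT (hp.pre (i := m) (by omega))
    have key : ∀ (s : ℕ → α) (h β : ℕ), S.MinP n s h → s h = z → S.LH n s h β → p γ = s β := by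
      intro s h β hs hsz hβ
      refine half hB (by omega) hz hpz t1 hL hm hX hph hl hs hsz ?_ hβ hγ
      intro z' h1 h2
      have := minP_min hs (by rw [hsz]; omega)
      rw [hsz] at this
      exact IH z' h1 (by omega)
    intro x y a c β' γ' h1 h2 h3 h4 h5 h6
    rw [← key x a β' h1 h3 h5, ← key y c γ' h2 h4 h6]

theorem claimi {n : ℕ} (hB : S.Bs n) (hT : 2 * n + 1 < S.T) {z : α} (hz : S.ten z = 2 * n + 1) :
    S.UniqLH n z := claim1 hB hT _ z hz (Nat.lt_succ_self _)

end Sys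

namespace Sys
variable {α : Type*} {S : Sys α}

theorem lemU {n : ℕ} (hB : S.Bs n) (hT : 2 * n + 1 < S.T) {x y : ℕ → α} {a c : ℕ}
    (h : S.MinP n x a) (h' : S.MinP n y c) (hc : S.Conn (2 * n) (x a) (y c)) {β γ : ℕ}
    (hβ : S.LH n x a β) (hγ : S.LH n y c γ) : x β = y γ := by
  have hn : 2 * n + 1 ≤ S.T := by omega
  obtain ⟨k, k1, k2, k3⟩ := h.base hB hn le_rfl
  obtain ⟨l, l1, l2, l3⟩ := h'.base hB hn le_rfl
  have e := hB n le_rfl _ _ (k3.trans (hc.trans l3.symm)) (by omega) (by omega)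
  have e' := h.pos_eq hB hn h' k1 l1 e k2
  subst e'
  have aux : ∀ (u : ℕ → α) (d δ : ℕ), S.MinP n u d → k ≤ d → 2 * n + 1 ≤ S.ten (u k) →
      S.Conn (2 * n) (u k) (u d) → S.LH n u d δ → S.LH n u k δ ∧ (2 * n + 1 < S.ten (u k) → δ = k) := by
    intro u d δ hu hk ht hcu hδ
    obtain ⟨b1, b2, b3⟩ := hδ
    have hle : δ ≤ k := by
      by_contra hh
      have := hu.contig hB hn le_rfl ht hk hcu δ (by omega) b1
      have := hB n le_rfl _ _ this (by omega) (by omega)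
      have := hu.1.inj (by omega) (by omega) this
      omega
    refine ⟨⟨hle, b2, fun i hi hi' => b3 i hi (by omega)⟩, ?_⟩
    intro h1
    by_contra hne
    have := b3 k (by omega) hk
    omega
  obtain ⟨p1, p2⟩ := aux x a β h k1 k2 k3 hβ
  obtain ⟨q1, q2⟩ := aux y c γ h' l1 l2 l3 hγ
  by_cases ht : S.ten (x k) = 2 * n + 1
  · exact claimi hB hT ht x y k k β γ (h.pre hB hn k1 k2) (h'.pre hB hn l1 l2) rfl e.symm p1 q1
  · rw [p2 (by omega), q2 (by rw [← e]; omega), e]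

theorem ext {x : ℕ → α} {a : ℕ} {b : α} (hx : S.P x a) (hb : ∀ i ≤ a, x i ≠ b)
    (h0 : a % 2 = 0 → S.U (x a) b) (h1 : a % 2 = 1 → S.Mt (x a) b) :
    S.P (fun i => if i ≤ a then x i else b) (a + 1) := by
  refine ⟨?_, ?_, ?_, ?_⟩
  · simpa using hx.1
  · intro i j hi hj e
    by_cases h1 : i ≤ a <;> by_cases h2 : j ≤ a <;> simp only [h1, h2, if_true, if_false] at e
    · exact hx.inj h1 h2 e
    · exact absurd e (hb i h1)
    · exact absurd e.symm (hb j h2)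
    · omega
  · intro i hi e
    by_cases h3 : i + 1 ≤ a
    · have h2 : i ≤ a := by omega
      simp only [h3, h2, if_true]
      exact hx.un (by omega) e
    · have h2 : i = a := by omega
      subst h2
      simpa using h0 e
  · intro i hi e
    by_cases h3 : i + 1 ≤ a
    · have h2 : i ≤ a := by omega
      simp only [h3, h2, if_true]
      exact hx.mt (by omega) e
    · have h2 : i = a := by omega
      subst h2
      simpa using h1 e

theorem extLH {n : ℕ} (hB : S.Bs n) (hT : 2 * n + 1 < S.T) {x y : ℕ → α} {a c : ℕ} {b : α}
    (h : S.MinP n x a) (h' : S.MinP n y c) (hyb : y c = b) (ht : S.ten b = 2 * n + 1)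
    (h0 : a % 2 = 0 → S.U (x a) b) (h1 : a % 2 = 1 → S.Mt (x a) b)
    (hl : ((a+1) % 2 = 0 ∧ S.isE n b ∧ a + 1 = S.ev b) ∨
      ((a+1) % 2 = 1 ∧ ¬ S.isE n b ∧ a + 1 = S.od b ∧ 2 * (a+1) < 2 * n + 1)) {β γ : ℕ}
    (hβ : S.LH n x a β) (hγ : S.LH n y c γ) : x β = y γ := by
  have hn : 2 * n + 1 ≤ S.T := by omega
  have hb : ∀ i ≤ a, x i ≠ b := by
    intro i hi e
    have := (h.pre hB hn hi (by rw [e]; omega)).2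
    rw [e] at this
    rcases hl with ⟨a1, a2, a3⟩ | ⟨a1, a2, a3, a4⟩ <;> rcases this with ⟨b1, b2, b3⟩ | ⟨b1, b2, b3, b4⟩
    · omega
    · exact absurd a2 b2
    · exact absurd b2 a2
    · omega
  have hP := ext h.1 hb h0 h1
  obtain ⟨Q, hQ⟩ : ∃ Q : ℕ → α, Q = fun i => if i ≤ a then x i else b := ⟨_, rfl⟩
  rw [← hQ] at hP
  have hQx : ∀ i ≤ a, Q i = x i := by intro i hi; rw [hQ]; simp [hi]
  have hQb : Q (a+1) = b := by rw [hQ]; simp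
  have hM : S.MinP n Q (a+1) := ⟨hP, by rw [hQb]; exact hl⟩
  obtain ⟨b1, b2, b3⟩ := hβ
  have := claimi hB hT ht Q y (a+1) c β γ hM h' hQb hyb ⟨by omega, by rw [hQx β b1]; exact b2, by
    intro i hi hi'
    by_cases e : i = a + 1
    · rw [e, hQb]; omega
    · rw [hQx i (by omega)]; exact b3 i hi (by omega)⟩ hγ
  rw [← this, hQx β b1]

theorem minP_ex {n : ℕ} (hT : 2 * n + 1 < S.T) {a : α} (h : S.isE n a ∨ 2 * S.od a < 2 * n + 1) :
    ∃ x L, S.MinP n x L ∧ x L = a := by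
  have hk := S.TK
  by_cases hE : S.isE n a
  · obtain ⟨x, h1, h2⟩ := S.ev_ex (a := a) (by unfold isE ten at hE; omega)
    exact ⟨x, _, ⟨h1, Or.inl ⟨S.ev_par a, by rw [h2]; exact hE, by rw [h2]⟩⟩, h2⟩
  · have h3 := h.resolve_left hE
    obtain ⟨x, h1, h2⟩ := S.od_ex (a := a) (by omega)
    exact ⟨x, _, ⟨h1, Or.inr ⟨S.od_par a, by rw [h2]; exact hE, by rw [h2], by omega⟩⟩, h2⟩

def Good (S : Sys α) (n : ℕ) (a : α) : Prop := S.isE n a ∨ 2 * S.od a < 2 * n + 1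

theorem Ed.symm {s : ℕ} {a b : α} (h : S.Ed s a b) : S.Ed s b a := by
  rcases h with ⟨h, h'⟩ | ⟨h, h'⟩
  · exact Or.inl ⟨S.Usymm h, by omega⟩
  · exact Or.inr ⟨S.Msymm h, by omega⟩

theorem Ed.good {n : ℕ} (hT : 2 * n + 1 < S.T) {a b : α} (h : S.Ed (2 * n + 2) a b) : S.Good n a := by
  have hk := S.TK
  have p1 := S.ev_par a
  have p2 := S.ev_par b
  have p3 := S.od_par a
  have p4 := S.od_par b
  by_cases hE : S.isE n a
  · exact Or.inl hE
  · right
    unfold isE ten at hE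
    rcases h with ⟨h, h'⟩ | ⟨h, h'⟩
    · have := ext_U (S.Usymm h) (by omega) (by omega)
      omega
    · have := S.ev_mate h
      omega

def Same (S : Sys α) (n : ℕ) (u v : α) : Prop :=
  ∀ x y a c β γ, S.MinP n x a → S.MinP n y c → x a = u → y c = v → S.LH n x a β → S.LH n y c γ →
    x β = y γ

theorem Same.symm {n : ℕ} {u v : α} (h : S.Same n u v) : S.Same n v u :=
  fun x y a c β γ h1 h2 h3 h4 h5 h6 => (h y x c a γ β h2 h1 h4 h3 h6 h5).symm

theorem prop_same {n : ℕ} (hB : S.Bs n) (hT : 2 * n + 1 < S.T) {u v : α} (h : S.Ed (2 * n + 2) u v)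
    (hc : ¬ S.Conn (2 * n) u v) (hu : S.isE n u) (hv : ¬ S.isE n v) : S.Same n u v := by
  have hk := S.TK
  have p1 := S.ev_par u
  have p2 := S.ev_par v
  have p3 := S.od_par u
  have p4 := S.od_par v
  rcases h with ⟨h, h'⟩ | ⟨h, h'⟩
  · have h3 : ¬ S.ev u + S.ev v + 1 ≤ 2 * n := fun h3 => hc (Relation.EqvGen.rel _ _ (Or.inl ⟨h, h3⟩))
    have hv' := hv
    unfold isE ten at hv'
    have h4 := ext_U h (by omega) (by omega)
    have h5 : S.ten v = 2 * n + 1 := by unfold ten; omega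
    have h6 : S.od v = S.ev u + 1 := by omega
    intro x y a c β γ m1 m2 e1 e2 l1 l2
    have hau : a % 2 = 0 ∧ a = S.ev u := by
      have := m1.2
      rw [e1] at this
      rcases this with g | g
      · exact ⟨g.1, g.2.2⟩
      · exact absurd hu g.2.1
    exact extLH hB hT m1 m2 e2 h5 (fun _ => by rw [e1]; exact h) (by omega)
      (Or.inr ⟨by omega, hv, by omega, by omega⟩) l1 l2
  · have h3 : ¬ S.od u + S.od v + 1 ≤ 2 * n := fun h3 => hc (Relation.EqvGen.rel _ _ (Or.inr ⟨h, h3⟩))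
    have q1 := S.ev_mate h
    have q2 := S.ev_mate (S.Msymm h)
    have h5 : S.ten u = 2 * n + 1 := by unfold ten; omega
    have hu' := hu
    unfold isE at hu'
    apply Same.symm
    intro x y a c β γ m1 m2 e1 e2 l1 l2
    have hau : a % 2 = 1 ∧ a = S.od v := by
      have := m1.2
      rw [e1] at this
      rcases this with g | g
      · exact absurd g.2.1 hv
      · exact ⟨g.1, g.2.2.1⟩
    exact extLH hB hT m1 m2 e2 h5 (by omega) (fun _ => by rw [e1]; exact S.Msymm h)
      (Or.inl ⟨by omega, hu, by omega⟩) l1 l2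

theorem edge_same {n : ℕ} (hB : S.Bs n) (hT : 2 * n + 1 < S.T) {u v : α} (h : S.Ed (2 * n + 2) u v) :
    S.Same n u v := by
  by_cases hc : S.Conn (2 * n) u v
  · intro x y a c β γ h1 h2 h3 h4 h5 h6
    exact lemU hB hT h1 h2 (by rw [h3, h4]; exact hc) h5 h6
  by_cases hu : S.isE n u <;> by_cases hv : S.isE n v
  · intro x y a c β γ m1 m2 e1 e2 l1 l2
    have p1 := S.ev_par u
    have p2 := S.ev_par v
    have hau : a % 2 = 0 ∧ a = S.ev u := by
      have := m1.2
      rw [e1] at this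
      rcases this with g | g
      · exact ⟨g.1, g.2.2⟩
      · exact absurd hu g.2.1
    have hcv : c % 2 = 0 ∧ c = S.ev v := by
      have := m2.2
      rw [e2] at this
      rcases this with g | g
      · exact ⟨g.1, g.2.2⟩
      · exact absurd hv g.2.1
    rcases h with ⟨h, h'⟩ | ⟨h, h'⟩
    · have h3 : ¬ S.ev u + S.ev v + 1 ≤ 2 * n := fun h3 => hc (Relation.EqvGen.rel _ _ (Or.inl ⟨h, h3⟩))
      exact pair hB (by omega) m1 m2 (by omega) (by omega) (fun _ => by rw [e1, e2]; exact h) (by omega) l1 l2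
        (fun k _ _ _ ht => claimi hB hT ht)
    · have h3 : ¬ S.od u + S.od v + 1 ≤ 2 * n := fun h3 => hc (Relation.EqvGen.rel _ _ (Or.inr ⟨h, h3⟩))
      have q1 := S.ev_mate h
      have q2 := S.ev_mate (S.Msymm h)
      unfold isE ten at hu hv
      omega
  · exact prop_same hB hT h hc hu hv
  · exact (prop_same hB hT h.symm (fun g => hc g.symm) hv hu).symm
  · intro x y a c β γ m1 m2 e1 e2 l1 l2
    have hau : a % 2 = 1 ∧ a = S.od u ∧ 2 * a < 2 * n + 1 := by
      have := m1.2
      rw [e1] at this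
      rcases this with g | g
      · exact absurd g.2.1 hu
      · exact ⟨g.1, g.2.2⟩
    have hcv : c % 2 = 1 ∧ c = S.od v ∧ 2 * c < 2 * n + 1 := by
      have := m2.2
      rw [e2] at this
      rcases this with g | g
      · exact absurd g.2.1 hv
      · exact ⟨g.1, g.2.2⟩
    rcases h with ⟨h, h'⟩ | ⟨h, h'⟩
    · unfold isE ten at hu hv
      omega
    · have h3 : ¬ S.od u + S.od v + 1 ≤ 2 * n := fun h3 => hc (Relation.EqvGen.rel _ _ (Or.inr ⟨h, h3⟩))
      exact pair hB (by omega) m1 m2 (by omega) (by omega) (by omega) (fun _ => by rw [e1, e2]; exact h) l1 l2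
        (fun k _ _ _ ht => claimi hB hT ht)

theorem conn_same {n : ℕ} (hB : S.Bs n) (hT : 2 * n + 1 < S.T) {u v : α} (h : S.Conn (2 * n + 2) u v) :
    u = v ∨ (S.Good n u ∧ S.Good n v ∧ S.Same n u v) := by
  induction h with
  | rel a b h => exact Or.inr ⟨h.good hT, h.symm.good hT, edge_same hB hT h⟩
  | refl a => exact Or.inl rfl
  | symm a b _ ih =>
    rcases ih with ih | ⟨h1, h2, h3⟩
    · exact Or.inl ih.symm
    · exact Or.inr ⟨h2, h1, h3.symm⟩
  | trans a b c _ _ ih1 ih2 =>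
    rcases ih1 with rfl | ⟨h1, h2, h3⟩
    · exact ih2
    rcases ih2 with rfl | ⟨g1, g2, g3⟩
    · exact Or.inr ⟨h1, h2, h3⟩
    refine Or.inr ⟨h1, g2, ?_⟩
    obtain ⟨w, l, hw, hwb⟩ := minP_ex hT h2
    obtain ⟨δ, hδ⟩ := LH_ex hT hw.1
    intro x y a c β γ m1 m2 e1 e2 l1 l2
    rw [h3 x w a l β δ m1 hw e1 hwb l1 hδ, g3 w y l c δ γ hw m2 hwb e2 hδ l2]

theorem B_step {n : ℕ} (hB : S.Bs n) (hT : 2 * n + 1 < S.T) : S.B (2 * n + 2) := by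
  intro u v h hu hv
  rcases conn_same hB hT h with e | ⟨h1, h2, h3⟩
  · exact e
  · obtain ⟨x, a, hx, hxu⟩ := minP_ex hT h1
    obtain ⟨y, c, hy, hyv⟩ := minP_ex hT h2
    have := h3 x y a c a c hx hy hxu hyv ⟨le_rfl, by rw [hxu]; omega, by intros; omega⟩
      ⟨le_rfl, by rw [hyv]; omega, by intros; omega⟩
    rw [← hxu, ← hyv, this]

theorem Bs_all : ∀ n, 2 * n + 1 ≤ S.T → S.Bs n := by
  intro n
  induction n with
  | zero =>
    intro _ j hj u v h _ _
    have : j = 0 := by omega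
    subst this
    induction h with
    | rel a b h => rcases h with ⟨_, h⟩ | ⟨_, h⟩ <;> omega
    | refl a => rfl
    | symm a b _ ih => exact (ih (by assumption) (by assumption)).symm
    | trans a b c hab hbc ih1 ih2 =>
      have hp : ∀ z, 2 * 0 < S.ten z := fun z => by have := ten_par (S := S) z; omega
      exact (ih1 (hp _) (hp _)).trans (ih2 (hp _) (hp _))
  | succ n ih =>
    intro hT j hj
    have hB := ih (by omega)
    by_cases e : j = n + 1
    · subst e; exact B_step hB (by omega)
    · exact hB j (by omega)

/-- classification of arcs of a maximum level path -/
theorem main {n : ℕ} (hn : 2 * n + 1 ≤ S.T) {x : ℕ → α} {L : ℕ} (hx : S.P x L)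
    (ht : S.ten (x L) = 2 * n + 1) (hL : n < L)
    (hl : (L % 2 = 0 ∧ L = S.ev (x L)) ∨ (L % 2 = 1 ∧ L = S.od (x L))) :
    ∃ m < L, ((m % 2 = 0 ∧ S.isE n (x m) ∧ S.isE n (x (m+1)) ∧ S.ev (x m) + S.ev (x (m+1)) + 1 = 2 * n + 1) ∨
      (m % 2 = 1 ∧ S.ev (x m) = n + 1 ∧ S.ev (x (m+1)) = n + 1 ∧ S.od (x m) = n ∧ S.od (x (m+1)) = n)) ∧
      ∀ i < L, i ≠ m →
        (i % 2 = 0 ∧ S.ev (x i) + S.ev (x (i+1)) + 1 < 2 * n + 1) ∨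
        (i % 2 = 1 ∧ S.od (x i) + S.od (x (i+1)) + 1 < 2 * n + 1) ∨
        (∃ a b, ((a = x i ∧ b = x (i+1)) ∨ (a = x (i+1) ∧ b = x i)) ∧
          ((i % 2 = 0 ∧ S.od b = S.ev a + 1 ∧ S.od b < S.ev b ∧ S.od b < S.K) ∨
          (i % 2 = 1 ∧ S.ev b < S.od b ∧ S.ev b < S.K))) := by
  have hB := Bs_all (S := S) n hn
  have hk := S.TK
  obtain ⟨t1, t2⟩ := max_tight hx ht hL hl
  obtain ⟨m, hm, hX, -, -, hu⟩ := uniqueX hB hn t1 t2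
  refine ⟨m, hm, ?_, ?_⟩
  · rcases X_lev hB hn t1 hm hX with g | ⟨e, h1, h2, h3, h4⟩
    · exact Or.inl g
    · right
      have := S.ev_mate (hx.mt hm e)
      have := S.ev_mate (S.Msymm (hx.mt hm e))
      exact ⟨e, by omega, by omega, h3, h4⟩
  · intro i hi hne
    have hX' : ¬ S.X n x i := fun h => hne (hu i hi h)
    obtain ⟨ta, tb⟩ := tight_arc hB hn t1 hi
    have hEl : ∀ a, ¬ S.isE n a → 2 * n + 1 < 2 * S.ev a ∧ 2 * n + 1 ≤ S.ten a := by
      intro a ha; unfold isE at ha; omega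
    rcases Nat.mod_two_eq_zero_or_one i with e | e
    · rcases TU hn (hx.un hi e) (ta e) with g | g | g | g
      · exact Or.inl ⟨e, g.2.2.2⟩
      · exact absurd ⟨g.1, fun _ => ⟨g.2.1, g.2.2.1⟩, by omega⟩ hX'
      · have := hEl _ g.2.2.1
        exact Or.inr (Or.inr ⟨_, _, Or.inl ⟨rfl, rfl⟩, Or.inl ⟨e, g.2.2.2.1, by omega, by omega⟩⟩)
      · have := hEl _ g.2.1
        exact Or.inr (Or.inr ⟨_, _, Or.inr ⟨rfl, rfl⟩, Or.inl ⟨e, g.2.2.2.1, by omega, by omega⟩⟩)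
    · have q1 := S.ev_mate (hx.mt hi e)
      have q2 := S.ev_mate (S.Msymm (hx.mt hi e))
      rcases TM hB (hx.mt hi e) (tb e) with g | g | g | g
      · exact Or.inr (Or.inl ⟨e, by unfold ten at g; omega⟩)
      · have := g.2.2.2.1
        unfold isE at this; unfold ten at *
        exact Or.inr (Or.inr ⟨_, _, Or.inr ⟨rfl, rfl⟩, Or.inr ⟨e, by omega, by omega⟩⟩)
      · have := g.2.2.2.2
        unfold isE at this; unfold ten at *
        exact Or.inr (Or.inr ⟨_, _, Or.inl ⟨rfl, rfl⟩, Or.inr ⟨e, by omega, by omega⟩⟩)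
      · exact absurd ⟨g.1, by omega, fun _ => ⟨g.2.2.2.1, g.2.2.2.2.1⟩⟩ hX'

end Sys

theorem AP.ext {α : Type*} {U Mt : α → α → Prop} {x : ℕ → α} {a : ℕ} {b : α} (hx : AP U Mt x a)
    (hb : ∀ i ≤ a, x i ≠ b)
    (h0 : a % 2 = 0 → U (x a) b) (h1 : a % 2 = 1 → Mt (x a) b) :
    AP U Mt (fun i => if i ≤ a then x i else b) (a + 1) := by
  refine ⟨?_, ?_, ?_, ?_⟩
  · simpa using hx.1
  · intro i j hi hj e
    by_cases h1 : i ≤ a <;> by_cases h2 : j ≤ a <;> simp only [h1, h2, if_true, if_false] at e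
    · exact hx.2.1 _ _ h1 h2 e
    · exact absurd e (hb i h1)
    · exact absurd e.symm (hb j h2)
    · omega
  · intro i hi e
    by_cases h3 : i + 1 ≤ a
    · have h2 : i ≤ a := by omega
      simp only [h3, h2, if_true]
      exact hx.2.2.1 _ (by omega) e
    · have h2 : i = a := by omega
      subst h2
      simpa using h0 e
  · intro i hi e
    by_cases h3 : i + 1 ≤ a
    · have h2 : i ≤ a := by omega
      simp only [h3, h2, if_true]
      exact hx.2.2.2 _ (by omega) e
    · have h2 : i = a := by omega
      subst h2
      simpa using h1 e

theorem AP.pre {α : Type*} {U Mt : α → α → Prop} {x : ℕ → α} {L : ℕ} (h : AP U Mt x L) {i : ℕ} (hi : i ≤ L) :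
    AP U Mt x i :=
  ⟨h.1, fun a b ha hb => h.2.1 a b (by omega) (by omega), fun a ha => h.2.2.1 a (by omega),
    fun a ha => h.2.2.2 a (by omega)⟩

def UU (G : SimpleGraph V) (M : G.Subgraph) (a b : V) : Prop := G.Adj a b ∧ ¬ M.Adj a b

theorem isAlt_iff {G : SimpleGraph V} {M : G.Subgraph} {a b : V} (w : G.Walk a b) :
    IsAlt G M w ↔ ∀ i < w.length, (M.Adj (w.getVert i) (w.getVert (i+1)) ↔ i % 2 = 1) := by
  unfold IsAlt
  constructor
  · intro h i hi
    have := h i (by simpa using hi)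
    rw [List.get_eq_getElem, SimpleGraph.Walk.getElem_edges, SimpleGraph.Subgraph.mem_edgeSet, Nat.odd_iff] at this
    exact this
  · intro h i hi
    rw [List.get_eq_getElem, SimpleGraph.Walk.getElem_edges, SimpleGraph.Subgraph.mem_edgeSet, Nat.odd_iff]
    exact h i (by simpa using hi)

theorem walk_AP {G : SimpleGraph V} {M : G.Subgraph} {f v : V} (w : G.Walk f v) (hf : f ∉ M.verts)
    (hp : w.IsPath) (ha : IsAlt G M w) : AP (UU G M) M.Adj w.getVert w.length := by
  rw [isAlt_iff] at ha
  refine ⟨?_, ?_, ?_, ?_⟩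
  · intro b hb
    rw [SimpleGraph.Walk.getVert_zero] at hb
    exact hf (M.edge_vert hb)
  · intro i j hi hj e
    exact hp.getVert_injOn (by simpa using hi) (by simpa using hj) e
  · intro i hi e
    refine ⟨w.adj_getVert_succ hi, fun h => ?_⟩
    have := (ha i hi).1 h
    omega
  · intro i hi e
    exact (ha i hi).2 e

theorem build {G : SimpleGraph V} : ∀ (L : ℕ) (x : ℕ → V), (∀ i < L, G.Adj (x i) (x (i+1))) →
    ∃ w : G.Walk (x 0) (x L), w.length = L ∧ ∀ i ≤ L, w.getVert i = x i := by
  intro L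
  induction L with
  | zero =>
    intro x _
    refine ⟨SimpleGraph.Walk.nil, rfl, ?_⟩
    intro i hi
    have : i = 0 := by omega
    subst this; rfl
  | succ L ih =>
    intro x h
    obtain ⟨w, h1, h2⟩ := ih (fun i => x (i+1)) (fun i hi => h (i+1) (by omega))
    refine ⟨SimpleGraph.Walk.cons (h 0 (by omega)) w, by simp [h1], ?_⟩
    intro i hi
    rcases i with _ | i
    · rfl
    · rw [SimpleGraph.Walk.getVert_cons_succ, h2 i (by omega)]

theorem AP_walk {G : SimpleGraph V} {M : G.Subgraph} (hM : M.IsMatching) {x : ℕ → V} {L : ℕ}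
    (h : AP (UU G M) M.Adj x L) : x 0 ∉ M.verts ∧ ∃ w : G.Walk (x 0) (x L), w.IsPath ∧ IsAlt G M w ∧
      w.length = L ∧ ∀ i ≤ L, w.getVert i = x i := by
  refine ⟨fun h0 => ?_, ?_⟩
  · obtain ⟨b, hb, -⟩ := hM h0
    exact h.1 b hb
  · obtain ⟨w, h1, h2⟩ := build (G := G) L x (fun i hi => by
      rcases Nat.mod_two_eq_zero_or_one i with e | e
      · exact (h.2.2.1 i hi e).1
      · exact M.adj_sub (h.2.2.2 i hi e))
    refine ⟨w, ?_, ?_, h1, h2⟩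
    · rw [← SimpleGraph.Walk.IsPath.getVert_injOn_iff]
      intro i hi j hj e
      simp only [Set.mem_setOf_eq, h1] at hi hj
      rw [h2 i hi, h2 j hj] at e
      exact h.2.1 i j hi hj e
    · rw [isAlt_iff]
      intro i hi
      rw [h1] at hi
      rw [h2 i (by omega), h2 (i+1) (by omega)]
      constructor
      · intro hm
        by_contra e
        exact (h.2.2.1 i hi (by omega)).2 hm
      · exact h.2.2.2 i hi

section
variable {G : SimpleGraph V} {M : G.Subgraph} (hM : M.IsMatching)

theorem el_le (hM : M.IsMatching) {x : ℕ → V} {L : ℕ} (h : AP (UU G M) M.Adj x L) (e : L % 2 = 0) :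
    evenlevel G M (x L) ≤ L := by
  obtain ⟨h0, w, h1, h2, h3, h4⟩ := AP_walk hM h
  exact sInf_le ⟨x 0, w, h0, h1, h2, by rw [h3]; exact Nat.even_iff.2 e, by rw [h3]⟩

theorem ol_le (hM : M.IsMatching) {x : ℕ → V} {L : ℕ} (h : AP (UU G M) M.Adj x L) (e : L % 2 = 1) :
    oddlevel G M (x L) ≤ L := by
  obtain ⟨h0, w, h1, h2, h3, h4⟩ := AP_walk hM h
  exact sInf_le ⟨x 0, w, h0, h1, h2, by rw [h3]; exact Nat.odd_iff.2 e, by rw [h3]⟩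

theorem el_ex {v : V} {k : ℕ} (h : evenlevel G M v = k) :
    k % 2 = 0 ∧ ∃ x, AP (UU G M) M.Adj x k ∧ x k = v := by
  unfold evenlevel at h
  by_cases hne : {n : ℕ∞ | ∃ (f : V) (w : G.Walk f v),
    f ∉ M.verts ∧ w.IsPath ∧ IsAlt G M w ∧ Even w.length ∧ n = (w.length : ℕ∞)}.Nonempty
  · have := csInf_mem hne
    rw [h] at this
    obtain ⟨f, w, h1, h2, h3, h4, h5⟩ := this
    have h5 : k = w.length := by exact_mod_cast h5
    refine ⟨by rw [h5]; exact Nat.even_iff.1 h4, w.getVert, by rw [h5]; exact walk_AP w h1 h2 h3, by rw [h5]; simp⟩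
  · rw [Set.not_nonempty_iff_eq_empty.1 hne, sInf_empty] at h
    exact absurd h (ENat.top_ne_coe k)

theorem ol_ex {v : V} {k : ℕ} (h : oddlevel G M v = k) :
    k % 2 = 1 ∧ ∃ x, AP (UU G M) M.Adj x k ∧ x k = v := by
  unfold oddlevel at h
  by_cases hne : {n : ℕ∞ | ∃ (f : V) (w : G.Walk f v),
    f ∉ M.verts ∧ w.IsPath ∧ IsAlt G M w ∧ Odd w.length ∧ n = (w.length : ℕ∞)}.Nonempty
  · have := csInf_mem hne
    rw [h] at this
    obtain ⟨f, w, h1, h2, h3, h4, h5⟩ := this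
    have h5 : k = w.length := by exact_mod_cast h5
    refine ⟨by rw [h5]; exact Nat.odd_iff.1 h4, w.getVert, by rw [h5]; exact walk_AP w h1 h2 h3, by rw [h5]; simp⟩
  · rw [Set.not_nonempty_iff_eq_empty.1 hne, sInf_empty] at h
    exact absurd h (ENat.top_ne_coe k)

theorem muniq (hM : M.IsMatching) {a b c : V} (h : M.Adj a b) (h' : M.Adj a c) : b = c :=
  (hM (M.edge_vert h)).unique h h'

theorem el_mate (hM : M.IsMatching) {a b : V} (h : M.Adj a b) :
    evenlevel G M a = oddlevel G M b + 1 := by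
  apply le_antisymm
  · rcases eq_or_ne (oddlevel G M b) ⊤ with e | e
    · rw [e]; simp
    · obtain ⟨k, hk⟩ := ENat.ne_top_iff_exists.1 e
      obtain ⟨e1, x, hx, hxb⟩ := ol_ex hk.symm
      rw [← hk]
      by_cases hin : ∃ i ≤ k, x i = a
      · obtain ⟨i, hi, hia⟩ := hin
        rcases Nat.mod_two_eq_zero_or_one i with e2 | e2
        · have := el_le hM (hx.pre hi) e2
          rw [hia] at this
          refine this.trans ?_
          exact_mod_cast (by omega : i ≤ k + 1)
        · exfalso
          by_cases hik : i = k
          · rw [hik, hxb] at hia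
            rw [hia] at h
            exact M.loopless.irrefl _ h
          · have := hx.2.2.2 i (by omega) e2
            rw [hia] at this
            have := muniq hM this h
            rw [← hxb] at this
            have := hx.2.1 _ _ (by omega) le_rfl this
            omega
      · push Not at hin
        have := el_le hM (hx.ext hin (by omega) (fun _ => by rw [hxb]; exact h.symm)) (by omega)
        simpa using this
  · rcases eq_or_ne (evenlevel G M a) ⊤ with e | e
    · rw [e]; simp
    · obtain ⟨k, hk⟩ := ENat.ne_top_iff_exists.1 e
      obtain ⟨e1, x, hx, hxa⟩ := el_ex hk.symm
      rw [← hk]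
      have hk0 : k ≠ 0 := by
        rintro rfl
        rw [← hxa] at h
        exact hx.1 _ h
      obtain ⟨k', rfl⟩ : ∃ k', k = k' + 1 := ⟨k - 1, by omega⟩
      have h1 := hx.2.2.2 k' (by omega) (by omega)
      rw [hxa] at h1
      have := muniq hM h1.symm h
      have h2 := ol_le hM (hx.pre (i := k') (by omega)) (by omega)
      rw [this] at h2
      push_cast
      gcongr

noncomputable def sev (G : SimpleGraph V) (M : G.Subgraph) (K : ℕ) (v : V) : ℕ :=
  if evenlevel G M v = ⊤ then K + 2 else (evenlevel G M v).toNat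
noncomputable def sod (G : SimpleGraph V) (M : G.Subgraph) (K : ℕ) (v : V) : ℕ :=
  if oddlevel G M v = ⊤ then K + 1 else (oddlevel G M v).toNat

theorem sev_cases (K : ℕ) (v : V) : (evenlevel G M v = ⊤ ∧ sev G M K v = K + 2) ∨ evenlevel G M v = sev G M K v := by
  unfold sev
  split_ifs with h
  · exact Or.inl ⟨h, rfl⟩
  · right; exact (ENat.coe_toNat h).symm

theorem sod_cases (K : ℕ) (v : V) : (oddlevel G M v = ⊤ ∧ sod G M K v = K + 1) ∨ oddlevel G M v = sod G M K v := by
  unfold sod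
  split_ifs with h
  · exact Or.inl ⟨h, rfl⟩
  · right; exact (ENat.coe_toNat h).symm

noncomputable def toSys (G : SimpleGraph V) (M : G.Subgraph) (hM : M.IsMatching) (n : ℕ)
    (hlm : ((2 * n + 1 : ℕ) : ℕ∞) ≤ lm G M) : Sys V where
  U := UU G M
  Mt := M.Adj
  ev := sev G M (4 * n + 10)
  od := sod G M (4 * n + 10)
  K := 4 * n + 10
  T := 2 * n + 1
  Usymm := fun h => ⟨h.1.symm, fun h' => h.2 h'.symm⟩
  Uirr := fun h => G.loopless.irrefl _ h.1
  Msymm := fun h => h.symm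
  Mirr := fun h => M.loopless.irrefl _ h
  Muniq := fun h h' => muniq hM h h'
  ev_par := fun a => by
    rcases sev_cases (G := G) (M := M) (4 * n + 10) a with ⟨_, h⟩ | h
    · rw [h]; omega
    · exact (el_ex h).1
  od_par := fun a => by
    rcases sod_cases (G := G) (M := M) (4 * n + 10) a with ⟨_, h⟩ | h
    · rw [h]; omega
    · exact (ol_ex h).1
  ev_le := fun {x L} h e => by
    have h1 := el_le hM h e
    rcases sev_cases (G := G) (M := M) (4 * n + 10) (x L) with ⟨h, _⟩ | h
    · rw [h] at h1; simp at h1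
    · rw [h] at h1; exact_mod_cast h1
  od_le := fun {x L} h e => by
    have h1 := ol_le hM h e
    rcases sod_cases (G := G) (M := M) (4 * n + 10) (x L) with ⟨h, _⟩ | h
    · rw [h] at h1; simp at h1
    · rw [h] at h1; exact_mod_cast h1
  ev_ex := fun {a} h => by
    rcases sev_cases (G := G) (M := M) (4 * n + 10) a with ⟨_, h1⟩ | h1
    · omega
    · exact (el_ex h1).2
  od_ex := fun {a} h => by
    rcases sod_cases (G := G) (M := M) (4 * n + 10) a with ⟨_, h1⟩ | h1
    · omega
    · exact (ol_ex h1).2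
  ev_mate := fun {a b} h => by
    have h1 := el_mate hM h
    rcases sev_cases (G := G) (M := M) (4 * n + 10) a with ⟨h2, h3⟩ | h2 <;>
      rcases sod_cases (G := G) (M := M) (4 * n + 10) b with ⟨h4, h5⟩ | h4
    · omega
    · rw [h2, h4] at h1
      exact absurd h1 (by exact_mod_cast ENat.top_ne_coe _)
    · rw [h2, h4] at h1; simp at h1
    · rw [h2, h4] at h1; exact_mod_cast h1
  aug := fun {x L} h e hf => by
    obtain ⟨h0, w, h1, h2, h3, h4⟩ := AP_walk hM h
    have hL : x L ∉ M.verts := fun h0 => by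
      obtain ⟨b, hb, -⟩ := hM h0
      exact hf b hb
    have : lm G M ≤ L := sInf_le ⟨x 0, x L, w, h0, hL, fun he => by
      have := h.2.1 _ _ (by omega) le_rfl he
      omega, h1, h2, by rw [h3]; exact Nat.odd_iff.2 e, by rw [h3]⟩
    exact_mod_cast hlm.trans this
  TK := by omega

theorem pred_AP {u v : V} (h : IsPred G M u v) : ∃ (y : ℕ → V) (l : ℕ), AP (UU G M) M.Adj y (l+1) ∧
    y (l+1) = v ∧ y l = u ∧ ((l+1 : ℕ) : ℕ∞) = minlevel G M v := by
  obtain ⟨f, w, h1, h2, h3, h4, h5, h6⟩ := h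
  have e : w.length - 1 + 1 = w.length := by omega
  refine ⟨w.getVert, w.length - 1, ?_, ?_, h6, ?_⟩
  · rw [e]; exact walk_AP w h1 h2 h3
  · rw [e]; simp
  · rw [e]; exact h4

theorem AP_pred (hM : M.IsMatching) {y : ℕ → V} {l : ℕ} (h : AP (UU G M) M.Adj y (l+1))
    (hl : ((l+1 : ℕ) : ℕ∞) = minlevel G M (y (l+1))) : IsPred G M (y l) (y (l+1)) := by
  obtain ⟨h0, w, h1, h2, h3, h4⟩ := AP_walk hM h
  refine ⟨_, w, h0, h1, h2, by rw [h3]; exact hl, by omega, ?_⟩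
  rw [h3]; simpa using h4 l (by omega)

theorem et_symm (u v : V) : edgeTenacity G M u v = edgeTenacity G M v u := by
  unfold edgeTenacity
  rw [Sym2.eq_swap, add_comm (oddlevel G M u), add_comm (evenlevel G M u)]

theorem br_symm {u v : V} (h : IsBridge G M u v) : IsBridge G M v u := ⟨h.1.symm, h.2.2, h.2.1⟩

theorem no_pred_U {n : ℕ} (hlm : ((2 * n + 1 : ℕ) : ℕ∞) ≤ lm G M) {u v : V} (h : UU G M u v)
    (hv : (toSys G M hM n hlm).isE n v)
    (he : (toSys G M hM n hlm).ev u + (toSys G M hM n hlm).ev v + 1 = 2 * n + 1) : ¬ IsPred G M u v := by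
  intro hp
  obtain ⟨y, l, h1, h2, h3, h4⟩ := pred_AP hp
  have e : l % 2 = 0 := by
    by_contra e
    have := h1.2.2.2 l (by omega) (by omega)
    rw [h2, h3] at this
    exact h.2 this
  have a1 := (toSys G M hM n hlm).od_le h1 (by omega)
  have a2 := (toSys G M hM n hlm).ev_le (h1.pre (i := l) (by omega)) e
  rw [h2] at a1
  rw [h3] at a2
  have hk : (toSys G M hM n hlm).K = 4 * n + 10 := rfl
  have b1 : l + 1 ≤ (toSys G M hM n hlm).ev v := by
    have : minlevel G M v ≤ evenlevel G M v := min_le_left _ _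
    rw [← h4] at this
    rcases sev_cases (G := G) (M := M) (4 * n + 10) v with ⟨_, g⟩ | g
    · have g : (toSys G M hM n hlm).ev v = 4 * n + 10 + 2 := g
      omega
    · rw [g] at this
      exact_mod_cast this
  have b2 : l + 1 ≤ (toSys G M hM n hlm).od v := by
    have : minlevel G M v ≤ oddlevel G M v := min_le_right _ _
    rw [← h4] at this
    rcases sod_cases (G := G) (M := M) (4 * n + 10) v with ⟨_, g⟩ | g
    · have g : (toSys G M hM n hlm).od v = 4 * n + 10 + 1 := g
      omega
    · rw [g] at this
      exact_mod_cast this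
  unfold Sys.isE Sys.ten at hv
  omega

theorem no_pred_M {n : ℕ} (hlm : ((2 * n + 1 : ℕ) : ℕ∞) ≤ lm G M) {u v : V} (h : M.Adj u v)
    (hv : (toSys G M hM n hlm).ev v = n + 1)
    (he : (toSys G M hM n hlm).od v = n) : ¬ IsPred G M u v := by
  intro hp
  obtain ⟨y, l, h1, h2, h3, h4⟩ := pred_AP hp
  have e : l % 2 = 1 := by
    by_contra e
    have := h1.2.2.1 l (by omega) (by omega)
    rw [h2, h3] at this
    exact this.2 h
  have a1 := (toSys G M hM n hlm).ev_le h1 (by omega)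
  rw [h2] at a1
  have b2 : l + 1 ≤ (toSys G M hM n hlm).od v := by
    have : minlevel G M v ≤ oddlevel G M v := min_le_right _ _
    rw [← h4] at this
    rcases sod_cases (G := G) (M := M) (4 * n + 10) v with ⟨_, g⟩ | g
    · have g : (toSys G M hM n hlm).od v = 4 * n + 10 + 1 := g
      omega
    · rw [g] at this
      exact_mod_cast this
  omega

theorem ev_eq {n : ℕ} (hlm : ((2 * n + 1 : ℕ) : ℕ∞) ≤ lm G M) {v : V}
    (h : (toSys G M hM n hlm).ev v < 4 * n + 10) : evenlevel G M v = (toSys G M hM n hlm).ev v := by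
  rcases sev_cases (G := G) (M := M) (4 * n + 10) v with ⟨_, g⟩ | g
  · have g : (toSys G M hM n hlm).ev v = 4 * n + 10 + 2 := g
    omega
  · exact g

theorem od_eq {n : ℕ} (hlm : ((2 * n + 1 : ℕ) : ℕ∞) ≤ lm G M) {v : V}
    (h : (toSys G M hM n hlm).od v < 4 * n + 10) : oddlevel G M v = (toSys G M hM n hlm).od v := by
  rcases sod_cases (G := G) (M := M) (4 * n + 10) v with ⟨_, g⟩ | g
  · have g : (toSys G M hM n hlm).od v = 4 * n + 10 + 1 := g
    omega
  · exact g

theorem ml_od {n : ℕ} (hlm : ((2 * n + 1 : ℕ) : ℕ∞) ≤ lm G M) {v : V}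
    (h : (toSys G M hM n hlm).od v < 4 * n + 10)
    (h' : (toSys G M hM n hlm).od v < (toSys G M hM n hlm).ev v) :
    ((toSys G M hM n hlm).od v : ℕ∞) = minlevel G M v := by
  unfold minlevel
  rw [od_eq hM hlm h]
  symm
  apply min_eq_right
  rcases sev_cases (G := G) (M := M) (4 * n + 10) v with ⟨g, _⟩ | g
  · rw [g]; exact le_top
  · rw [g]; exact_mod_cast h'.le

theorem ml_ev {n : ℕ} (hlm : ((2 * n + 1 : ℕ) : ℕ∞) ≤ lm G M) {v : V}
    (h : (toSys G M hM n hlm).ev v < 4 * n + 10)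
    (h' : (toSys G M hM n hlm).ev v < (toSys G M hM n hlm).od v) :
    ((toSys G M hM n hlm).ev v : ℕ∞) = minlevel G M v := by
  unfold minlevel
  rw [ev_eq hM hlm h]
  symm
  apply min_eq_left
  rcases sod_cases (G := G) (M := M) (4 * n + 10) v with ⟨g, _⟩ | g
  · rw [g]; exact le_top
  · rw [g]; exact_mod_cast h'.le

theorem pred_U {n : ℕ} (hlm : ((2 * n + 1 : ℕ) : ℕ∞) ≤ lm G M) {a b : V} (hab : UU G M a b)
    (h1 : (toSys G M hM n hlm).od b = (toSys G M hM n hlm).ev a + 1)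
    (h2 : (toSys G M hM n hlm).od b < (toSys G M hM n hlm).ev b)
    (h3 : (toSys G M hM n hlm).od b < (toSys G M hM n hlm).K) : IsPred G M a b := by
  have hml := ml_od hM hlm h3 h2
  obtain ⟨k, hk⟩ : ∃ k, k = (toSys G M hM n hlm).ev a := ⟨_, rfl⟩
  have hpar := (toSys G M hM n hlm).ev_par a
  obtain ⟨x, hx, hxa⟩ := (toSys G M hM n hlm).ev_ex (a := a) (by omega)
  rw [← hk] at hx hxa hpar
  rw [h1, ← hk] at hml
  have hx : AP (UU G M) M.Adj x k := hx
  have hb : ∀ i ≤ k, x i ≠ b := by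
    intro i hi e
    rcases Nat.mod_two_eq_zero_or_one i with e1 | e1
    · have := (toSys G M hM n hlm).ev_le (hx.pre hi) e1
      rw [e] at this; omega
    · have := (toSys G M hM n hlm).od_le (hx.pre hi) e1
      rw [e] at this; omega
  have := AP_pred hM (hx.ext hb (fun _ => by rw [hxa]; exact hab) (by omega)) (by simpa using hml)
  simpa [hxa] using this

theorem pred_M {n : ℕ} (hlm : ((2 * n + 1 : ℕ) : ℕ∞) ≤ lm G M) {a b : V} (hab : M.Adj a b)
    (h2 : (toSys G M hM n hlm).ev b < (toSys G M hM n hlm).od b)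
    (h3 : (toSys G M hM n hlm).ev b < (toSys G M hM n hlm).K) : IsPred G M a b := by
  have hml := ml_ev hM hlm h3 h2
  have hpar := (toSys G M hM n hlm).ev_par b
  obtain ⟨x, hx, hxb⟩ := (toSys G M hM n hlm).ev_ex (a := b) (by omega)
  obtain ⟨k, hk⟩ : ∃ k, k = (toSys G M hM n hlm).ev b := ⟨_, rfl⟩
  rw [← hk] at hx hxb hpar hml
  have hx : AP (UU G M) M.Adj x k := hx
  have hk0 : k ≠ 0 := by
    rintro rfl
    rw [← hxb] at hab
    exact hx.1 _ hab.symm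
  obtain ⟨l, rfl⟩ : ∃ l, k = l + 1 := ⟨k - 1, by omega⟩
  have h5 := hx.2.2.2 l (by omega) (by omega)
  rw [hxb] at h5
  have h6 := muniq hM h5.symm hab.symm
  have := AP_pred hM hx (by rw [hxb]; exact hml)
  rw [hxb, h6] at this
  exact this
end

theorem et_U {G : SimpleGraph V} {M : G.Subgraph} {u v : V} (h : UU G M u v) :
    edgeTenacity G M u v = evenlevel G M u + evenlevel G M v + 1 := by
  unfold edgeTenacity
  rw [if_neg (by rw [SimpleGraph.Subgraph.mem_edgeSet]; exact h.2)]

theorem et_M {G : SimpleGraph V} {M : G.Subgraph} {u v : V} (h : M.Adj u v) :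
    edgeTenacity G M u v = oddlevel G M u + oddlevel G M v + 1 := by
  unfold edgeTenacity
  rw [if_pos (by rw [SimpleGraph.Subgraph.mem_edgeSet]; exact h)]

theorem mem_edges_ex {G : SimpleGraph V} {f v : V} (w : G.Walk f v) {e : Sym2 V} (h : e ∈ w.edges) :
    ∃ i < w.length, e = s(w.getVert i, w.getVert (i+1)) := by
  obtain ⟨i, hi, rfl⟩ := List.mem_iff_getElem.1 h
  exact ⟨i, by simpa using hi, SimpleGraph.Walk.getElem_edges hi⟩

/-- On any `maxlevel(v)` path, where `tenacity(v) = t ≤ l_m`, there is exactly one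
bridge of tenacity `t`. -/
theorem stmt15 (G : SimpleGraph V) (M : G.Subgraph) (hM : M.IsMatching)
    (v : V) (t : ℕ∞) (ht : tenacity G M v = t) (hlm : t ≤ lm G M)
    (f : V) (w : G.Walk f v) (hf : f ∉ M.verts) (hp : w.IsPath) (halt : IsAlt G M w)
    (hlen : (w.length : ℕ∞) = maxlevel G M v) :
    ∃ a b : V, s(a, b) ∈ w.edges ∧ IsBridge G M a b ∧ edgeTenacity G M a b = t ∧
      ∀ c d : V, s(c, d) ∈ w.edges → IsBridge G M c d → edgeTenacity G M c d = t →
        s(c, d) = s(a, b) := by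
  have hle1 : evenlevel G M v ≤ w.length := by rw [hlen]; exact le_max_left _ _
  have hle2 : oddlevel G M v ≤ w.length := by rw [hlen]; exact le_max_right _ _
  obtain ⟨e0, he0⟩ := ENat.ne_top_iff_exists.1 (ne_top_of_le_ne_top (ENat.coe_ne_top _) hle1)
  obtain ⟨o0, ho0⟩ := ENat.ne_top_iff_exists.1 (ne_top_of_le_ne_top (ENat.coe_ne_top _) hle2)
  have hpe := (el_ex he0.symm).1
  have hpo := (ol_ex ho0.symm).1
  have hlen' : w.length = max e0 o0 := by
    unfold maxlevel at hlen
    rw [← he0, ← ho0] at hlen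
    rcases le_total e0 o0 with h | h
    · rw [max_eq_right (by exact_mod_cast h)] at hlen
      rw [max_eq_right h]; exact_mod_cast hlen
    · rw [max_eq_left (by exact_mod_cast h)] at hlen
      rw [max_eq_left h]; exact_mod_cast hlen
  obtain ⟨n, hn⟩ : ∃ n, e0 + o0 = 2 * n + 1 := ⟨(e0 + o0) / 2, by omega⟩
  have htn : t = ((2 * n + 1 : ℕ) : ℕ∞) := by
    rw [← ht, tenacity, ← he0, ← ho0, ← hn]; push_cast; rfl
  subst htn
  have hS1 : (toSys G M hM n hlm).ev v = e0 := by
    show sev G M _ v = e0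
    unfold sev; rw [← he0]; simp
  have hS2 : (toSys G M hM n hlm).od v = o0 := by
    show sod G M _ v = o0
    unfold sod; rw [← ho0]; simp
  have hAP := walk_AP w hf hp halt
  obtain ⟨m, hm, hX, hr⟩ := Sys.main (S := toSys G M hM n hlm) (n := n) (le_refl (2 * n + 1))
    (x := w.getVert) (L := w.length) hAP (by
      rw [SimpleGraph.Walk.getVert_length]; unfold Sys.ten; omega) (by omega) (by
      rw [SimpleGraph.Walk.getVert_length]; omega)
  refine ⟨w.getVert m, w.getVert (m+1), ?_, ?_, ?_, ?_⟩
  · have hm' : m < w.edges.length := by simpa using hm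
    rw [← SimpleGraph.Walk.getElem_edges hm']
    exact List.getElem_mem _
  · refine ⟨w.adj_getVert_succ hm, ?_⟩
    rcases hX with ⟨e, h1, h2, h3⟩ | ⟨e, h1, h2, h3, h4⟩
    · have hu := hAP.2.2.1 m hm e
      exact ⟨no_pred_U hM hlm hu h2 h3, no_pred_U hM hlm ⟨hu.1.symm, fun h => hu.2 h.symm⟩ h1 (by omega)⟩
    · have hu := hAP.2.2.2 m hm e
      exact ⟨no_pred_M hM hlm hu h2 h4, no_pred_M hM hlm hu.symm h1 h3⟩
  · rcases hX with ⟨e, h1, h2, h3⟩ | ⟨e, h1, h2, h3, h4⟩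
    · rw [et_U (hAP.2.2.1 m hm e), ev_eq hM hlm (by omega), ev_eq hM hlm (by omega), ← h3]
      push_cast; rfl
    · rw [et_M (hAP.2.2.2 m hm e), od_eq hM hlm (by omega), od_eq hM hlm (by omega), h3, h4]
      norm_cast; omega
  · intro c d hcd hbr hten
    obtain ⟨i, hi, hi'⟩ := mem_edges_ex w hcd
    by_cases him : i = m
    · rw [hi', him]
    exfalso
    have hbt : IsBridge G M (w.getVert i) (w.getVert (i+1)) ∧
        edgeTenacity G M (w.getVert i) (w.getVert (i+1)) = ((2 * n + 1 : ℕ) : ℕ∞) := by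
      rcases Sym2.eq_iff.1 hi' with ⟨rfl, rfl⟩ | ⟨rfl, rfl⟩
      · exact ⟨hbr, hten⟩
      · exact ⟨br_symm hbr, by rw [et_symm]; exact hten⟩
    obtain ⟨hb, hte⟩ := hbt
    rcases hr i hi him with ⟨e, h1⟩ | ⟨e, h1⟩ | ⟨a, b, hab, ⟨e, h1, h2, h3⟩ | ⟨e, h1, h2⟩⟩
    · rw [et_U (hAP.2.2.1 i hi e), ev_eq hM hlm (by omega), ev_eq hM hlm (by omega)] at hte
      norm_cast at hte
      omega
    · rw [et_M (hAP.2.2.2 i hi e), od_eq hM hlm (by omega), od_eq hM hlm (by omega)] at hte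
      norm_cast at hte
      omega
    · have hu := hAP.2.2.1 i hi e
      rcases hab with ⟨rfl, rfl⟩ | ⟨rfl, rfl⟩
      · exact hb.2.1 (pred_U hM hlm hu h1 h2 h3)
      · exact hb.2.2 (pred_U hM hlm ⟨hu.1.symm, fun h => hu.2 h.symm⟩ h1 h2 h3)
    · have hu := hAP.2.2.2 i hi e
      rcases hab with ⟨rfl, rfl⟩ | ⟨rfl, rfl⟩
      · exact hb.2.1 (pred_M hM hlm hu h1 h2)
      · exact hb.2.2 (pred_M hM hlm hu.symm h1 h2)

end MV
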